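/- Let ρ^{ABCD} be a state of a quadripartite quantum system on finite-dimensional Hilbert spaces such that strong subadditivity is saturated for the three triples ABC, CAB and ADB (pivot always in the middle), i.e. I(A;C|B) = 0, I(C;B|A) = 0 and I(A;B|D) = 0. Then I(C;D) ≥ I(C;AB). -/

import Mathlib

/-!
Write `K_A = ρ_AC ρ_A⁻¹`, `K_B = ρ_BC ρ_B⁻¹`, with inverses taken on supports. Marginals are kept inside
the full matrix algebra: erasing a party is a trace-preserving conditional expectation `E` (`CE`), the
partial trace tensored with the maximally mixed state, so all entropies become numbers
`Tr ρ log E(ρ)` up to logarithms of dimensions (`entropy_bridge`).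

* Saturated strong subadditivity is equality in the monotonicity of relative entropy under `E`. Writing
  relative entropy as an integral of quadratic variational problems, equality forces the optimisers
  before and after `E` to agree (`Xi_rigid`); by partial fractions and analytic continuation this gives
  the recovery identity `R^z = E(R)^z E(σ)^{-z} σ^z` for all complex `z` (`ssa_eq`).
* The conditions `I(A;C|B) = I(C;B|A) = 0` give two recovery identities for `ρ_ABC`. Slicing them along
  `C` shows that `ρ_AC` commutes with `ρ_A` and `ρ_BC` with `ρ_B` (`commute_marginal`); hence `K_A`, `K_B`
  are positive and `ρ_ABC = K_A ρ_AB = K_B ρ_AB` (`exists_K`).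
* The condition `I(A;B|D) = 0` gives `ρ_ABD^{1/2} = ρ_BD^{1/2} ρ_D^{-1/2} ρ_AD^{1/2}`. Since `K_A` and
  `K_B` agree on the support of `ρ_AB`, this transfers the information about `C` to `D`: there is a
  Hermitian `K_D` on `CD` with `K_A ρ_AD^{1/2} = ρ_AD^{1/2} K_D` (`exists_KD`).
* Consequently functions of `K_A` and of `K_D` agree on `ρ`, and `K_D ρ_D` is positive with the same
  trace as `ρ_CD`. Klein's inequality for `ρ_CD` and `K_D ρ_D` reads
  `Tr ρ log ρ_CD ≥ Tr ρ log K_D + Tr ρ log ρ_D`, while `Tr ρ log K_D = Tr ρ log K_A` equals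
  `Tr ρ log ρ_ABC - Tr ρ log ρ_AB` because `ρ_ABC = K_A ρ_AB` is a commuting product. This is the claim
  (`abstract_main`).
-/

open scoped BigOperators ComplexOrder

/-- Von Neumann entropy (base 2) of a matrix: for a Hermitian matrix, the Shannon
entropy of its eigenvalues; junk value `0` for non-Hermitian matrices. -/
noncomputable def vNEntropy {n : Type*} [Fintype n] [DecidableEq n] (M : Matrix n n ℂ) : ℝ :=
  if h : M.IsHermitian then -∑ i, (h.eigenvalues i) * Real.logb 2 (h.eigenvalues i) else 0

/-- A density matrix: positive semidefinite with trace one. -/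
def IsState {n : Type*} [Fintype n] [DecidableEq n] (M : Matrix n n ℂ) : Prop :=
  M.PosSemidef ∧ M.trace = 1

section Quad

variable {A B C D : Type*} [Fintype A] [DecidableEq A] [Fintype B] [DecidableEq B]
  [Fintype C] [DecidableEq C] [Fintype D] [DecidableEq D]
  (ρ : Matrix (A × B × C × D) (A × B × C × D) ℂ)

/-- Entropies of the 15 marginals of a quadripartite state. -/
noncomputable def SA : ℝ :=
  vNEntropy (Matrix.of fun a a' : A => ∑ b, ∑ c, ∑ d, ρ (a, b, c, d) (a', b, c, d))
noncomputable def SB : ℝ :=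
  vNEntropy (Matrix.of fun b b' : B => ∑ a, ∑ c, ∑ d, ρ (a, b, c, d) (a, b', c, d))
noncomputable def SC : ℝ :=
  vNEntropy (Matrix.of fun c c' : C => ∑ a, ∑ b, ∑ d, ρ (a, b, c, d) (a, b, c', d))
noncomputable def SD : ℝ :=
  vNEntropy (Matrix.of fun d d' : D => ∑ a, ∑ b, ∑ c, ρ (a, b, c, d) (a, b, c, d'))
noncomputable def SAB : ℝ :=
  vNEntropy (Matrix.of fun p q : A × B => ∑ c, ∑ d, ρ (p.1, p.2, c, d) (q.1, q.2, c, d))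
noncomputable def SAC : ℝ :=
  vNEntropy (Matrix.of fun p q : A × C => ∑ b, ∑ d, ρ (p.1, b, p.2, d) (q.1, b, q.2, d))
noncomputable def SAD : ℝ :=
  vNEntropy (Matrix.of fun p q : A × D => ∑ b, ∑ c, ρ (p.1, b, c, p.2) (q.1, b, c, q.2))
noncomputable def SBC : ℝ :=
  vNEntropy (Matrix.of fun p q : B × C => ∑ a, ∑ d, ρ (a, p.1, p.2, d) (a, q.1, q.2, d))
noncomputable def SBD : ℝ :=
  vNEntropy (Matrix.of fun p q : B × D => ∑ a, ∑ c, ρ (a, p.1, c, p.2) (a, q.1, c, q.2))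
noncomputable def SCD : ℝ :=
  vNEntropy (Matrix.of fun p q : C × D => ∑ a, ∑ b, ρ (a, b, p.1, p.2) (a, b, q.1, q.2))
noncomputable def SABC : ℝ :=
  vNEntropy (Matrix.of fun p q : A × B × C =>
    ∑ d, ρ (p.1, p.2.1, p.2.2, d) (q.1, q.2.1, q.2.2, d))
noncomputable def SABD : ℝ :=
  vNEntropy (Matrix.of fun p q : A × B × D =>
    ∑ c, ρ (p.1, p.2.1, c, p.2.2) (q.1, q.2.1, c, q.2.2))
noncomputable def SACD : ℝ :=
  vNEntropy (Matrix.of fun p q : A × C × D =>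
    ∑ b, ρ (p.1, b, p.2.1, p.2.2) (q.1, b, q.2.1, q.2.2))
noncomputable def SBCD : ℝ :=
  vNEntropy (Matrix.of fun p q : B × C × D =>
    ∑ a, ρ (a, p.1, p.2.1, p.2.2) (a, q.1, q.2.1, q.2.2))
noncomputable def SABCD : ℝ := vNEntropy ρ

end Quad

set_option linter.unusedSectionVars false
set_option linter.unusedSimpArgs false
set_option linter.style.longLine false

namespace LW

open Matrix

/-! ### Functional calculus of Hermitian matrices -/

section Spectral
variable {n m : Type*} [Fintype n] [DecidableEq n] [Fintype m] [DecidableEq m]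

/-- The eigenvalues of a Hermitian matrix (junk value `0` otherwise). -/
noncomputable def ev (M : Matrix n n ℂ) (i : n) : ℝ :=
  if h : M.IsHermitian then h.eigenvalues i else 0

/-- The rank-one spectral projections of a Hermitian matrix (junk value `0` otherwise). -/
noncomputable def sp (M : Matrix n n ℂ) (i : n) : Matrix n n ℂ :=
  if h : M.IsHermitian then
    (h.eigenvectorUnitary : Matrix n n ℂ) * Matrix.single i i 1 *
      (h.eigenvectorUnitary : Matrix n n ℂ)ᴴ
  else 0

/-- Functional calculus of a Hermitian matrix. -/
noncomputable def fc (M : Matrix n n ℂ) (f : ℝ → ℂ) : Matrix n n ℂ :=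
  ∑ i, f (ev M i) • sp M i

variable {M : Matrix n n ℂ}

theorem eU (h : M.IsHermitian) : (h.eigenvectorUnitary : Matrix n n ℂ)ᴴ *
    (h.eigenvectorUnitary : Matrix n n ℂ) = 1 := by
  have := Unitary.coe_star_mul_self h.eigenvectorUnitary
  simpa [Matrix.star_eq_conjTranspose] using this

theorem eU' (h : M.IsHermitian) : (h.eigenvectorUnitary : Matrix n n ℂ) *
    (h.eigenvectorUnitary : Matrix n n ℂ)ᴴ = 1 := by
  have := Unitary.coe_mul_star_self h.eigenvectorUnitary
  simpa [Matrix.star_eq_conjTranspose] using this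

theorem sp_mul (h : M.IsHermitian) (i j : n) :
    sp M i * sp M j = if i = j then sp M i else 0 := by
  simp only [sp, h, dif_pos]
  set U : Matrix n n ℂ := (h.eigenvectorUnitary : Matrix n n ℂ)
  have e : U * single i i 1 * Uᴴ * (U * single j j 1 * Uᴴ) =
      U * (single i i 1 * (Uᴴ * U) * single j j 1) * Uᴴ := by noncomm_ring
  rw [e, eU h, Matrix.mul_one]
  by_cases hij : i = j
  · subst hij; simp
  · simp [hij]

theorem sum_sp (h : M.IsHermitian) : ∑ i, sp M i = 1 := by
  simp only [sp, h, dif_pos]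
  rw [← Finset.sum_mul, ← Finset.mul_sum, Matrix.sum_single_one, Matrix.mul_one, eU' h]

theorem sp_herm (h : M.IsHermitian) (i : n) : (sp M i)ᴴ = sp M i := by
  simp only [sp, h, dif_pos, Matrix.conjTranspose_mul, Matrix.conjTranspose_conjTranspose,
    Matrix.conjTranspose_single, star_one, Matrix.mul_assoc]

theorem trace_sp (h : M.IsHermitian) (i : n) : (sp M i).trace = 1 := by
  simp only [sp, h, dif_pos]
  rw [Matrix.trace_mul_comm, ← Matrix.mul_assoc, eU h, Matrix.one_mul, Matrix.trace_single_eq_same]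

theorem eq_sum_sp (h : M.IsHermitian) : ∑ i, ((ev M i : ℝ) : ℂ) • sp M i = M := by
  conv_rhs => rw [h.spectral_theorem]
  simp only [sp, ev, h, dif_pos, Unitary.conjStarAlgAut_apply]
  rw [show (diagonal ((RCLike.ofReal : ℝ → ℂ) ∘ h.eigenvalues)) =
    ∑ i, ((h.eigenvalues i : ℝ) : ℂ) • (single i i (1:ℂ)) by
      ext a b
      rw [Matrix.sum_apply]
      simp [diagonal_apply, single_apply, ite_and, eq_comm]]
  rw [Finset.mul_sum, Finset.sum_mul]
  refine Finset.sum_congr rfl fun i _ => ?_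
  rw [Matrix.mul_smul, Matrix.smul_mul, Matrix.star_eq_conjTranspose]

theorem fc_id (h : M.IsHermitian) : fc M (fun x => (x : ℂ)) = M := eq_sum_sp h

theorem fc_sp (h : M.IsHermitian) (f : ℝ → ℂ) (j : n) : fc M f * sp M j = f (ev M j) • sp M j := by
  simp [fc, Finset.sum_mul, sp_mul h]

theorem sp_fc (h : M.IsHermitian) (f : ℝ → ℂ) (j : n) : sp M j * fc M f = f (ev M j) • sp M j := by
  simp [fc, Finset.mul_sum, sp_mul h]

theorem mul_sp (h : M.IsHermitian) (j : n) : M * sp M j = (ev M j : ℂ) • sp M j := by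
  conv_lhs => rw [← fc_id h]
  rw [← fc_sp h (fun x => (x : ℂ))]; rw [fc_id h]

theorem sp_self_mul (h : M.IsHermitian) (j : n) : sp M j * M = (ev M j : ℂ) • sp M j := by
  have := sp_fc h (fun x => (x : ℂ)) j
  rwa [fc_id h] at this

theorem fc_mul (h : M.IsHermitian) (f g : ℝ → ℂ) :
    fc M f * fc M g = fc M (fun x => f x * g x) := by
  rw [fc, Finset.sum_mul]
  simp only [Matrix.smul_mul, sp_fc h, smul_smul]
  rw [fc]

theorem fc_add (f g : ℝ → ℂ) : fc M f + fc M g = fc M (fun x => f x + g x) := by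
  simp [fc, add_smul, Finset.sum_add_distrib]

theorem fc_sub (f g : ℝ → ℂ) : fc M f - fc M g = fc M (fun x => f x - g x) := by
  simp [fc, sub_smul, Finset.sum_sub_distrib]

theorem fc_smul (c : ℂ) (f : ℝ → ℂ) : c • fc M f = fc M (fun x => c * f x) := by
  simp [fc, smul_smul, Finset.smul_sum]

theorem fc_one (h : M.IsHermitian) : fc M (fun _ => 1) = 1 := by
  simp [fc, sum_sp h]

theorem fc_zero : fc M (fun _ => 0) = 0 := by
  simp [fc]

theorem fc_star (h : M.IsHermitian) (f : ℝ → ℂ) :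
    (fc M f)ᴴ = fc M (fun x => star (f x)) := by
  simp [fc, Matrix.conjTranspose_sum, sp_herm h]

theorem fc_congr {f g : ℝ → ℂ} (hfg : ∀ i, f (ev M i) = g (ev M i)) : fc M f = fc M g := by
  simp [fc, hfg]

theorem trace_fc (h : M.IsHermitian) (f : ℝ → ℂ) : (fc M f).trace = ∑ i, f (ev M i) := by
  simp [fc, Matrix.trace_sum, trace_sp h]

theorem sp_psd (h : M.IsHermitian) (i : n) : (sp M i).PosSemidef := by
  have := Matrix.posSemidef_conjTranspose_mul_self (sp M i)
  rwa [sp_herm h, sp_mul h, if_pos rfl] at this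

theorem fc_psd (h : M.IsHermitian) {f : ℝ → ℂ} (hf : ∀ i, 0 ≤ f (ev M i)) :
    (fc M f).PosSemidef :=
  Matrix.posSemidef_sum _ fun i _ => (sp_psd h i).smul (hf i)

theorem fc_herm (h : M.IsHermitian) (f : ℝ → ℝ) : (fc M (fun x => (f x : ℂ))).IsHermitian := by
  rw [Matrix.IsHermitian, fc_star h]; simp

theorem ev_nonneg (h : M.PosSemidef) (i : n) : 0 ≤ ev M i := by
  simp only [ev, h.isHermitian, dif_pos]; exact h.eigenvalues_nonneg i

/-- Intertwining: `A X = c X B` implies `f(A) X = X f(cB)`. -/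
theorem fc_intertwine {A : Matrix m m ℂ} {B : Matrix n n ℂ} (hA : A.IsHermitian)
    (hB : B.IsHermitian) (X : Matrix m n ℂ) (c : ℝ) (hX : A * X = (c : ℂ) • (X * B)) (f : ℝ → ℂ) :
    fc A f * X = X * fc B (fun x => f (c * x)) := by
  have key : ∀ i j, f (ev A i) • (sp A i * X * sp B j) =
      f (c * ev B j) • (sp A i * X * sp B j) := by
    intro i j
    by_cases hij : ev A i = c * ev B j
    · rw [hij]
    · have h1 : (ev A i : ℂ) • (sp A i * X * sp B j) =
          ((c * ev B j : ℝ) : ℂ) • (sp A i * X * sp B j) := by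
        have : sp A i * (A * X) * sp B j = sp A i * ((c : ℂ) • (X * B)) * sp B j := by rw [hX]
        rw [← Matrix.mul_assoc, sp_self_mul hA, Matrix.mul_smul, Matrix.smul_mul, Matrix.smul_mul,
          Matrix.smul_mul, Matrix.mul_assoc (sp A i) (X * B), Matrix.mul_assoc X, mul_sp hB,
          Matrix.mul_smul, Matrix.mul_smul, smul_smul, ← Matrix.mul_assoc] at this
        rw [this]; push_cast; rfl
      rw [← sub_eq_zero, ← sub_smul, smul_eq_zero] at h1
      rcases h1 with h1 | h1
      · exfalso; apply hij; rw [sub_eq_zero] at h1; exact_mod_cast h1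
      · rw [h1]; simp
  have e1 : fc A f * X = ∑ i, ∑ j, f (ev A i) • (sp A i * X * sp B j) := by
    conv_lhs => rw [← Matrix.mul_one X, ← sum_sp hB]
    simp only [fc, Matrix.sum_mul, Matrix.mul_sum, Matrix.smul_mul, Matrix.mul_assoc]
    exact Finset.sum_comm
  have e2 : X * fc B (fun x => f (c * x)) =
      ∑ i, ∑ j, f (c * ev B j) • (sp A i * X * sp B j) := by
    conv_lhs => rw [← Matrix.one_mul X, ← sum_sp hA]
    simp only [fc, Matrix.sum_mul, Matrix.mul_sum, Matrix.mul_smul, Matrix.mul_assoc,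
      Finset.smul_sum]
    exact Finset.sum_comm
  rw [e1, e2]
  simp only [key]

theorem fc_intertwine_one {A : Matrix m m ℂ} {B : Matrix n n ℂ} (hA : A.IsHermitian)
    (hB : B.IsHermitian) (X : Matrix m n ℂ) (hX : A * X = X * B) (f : ℝ → ℂ) :
    fc A f * X = X * fc B f := by
  have := fc_intertwine hA hB X 1 (by simpa using hX) f
  simpa using this

theorem fc_comm (h : M.IsHermitian) {X : Matrix n n ℂ} (hX : M * X = X * M) (f : ℝ → ℂ) :
    fc M f * X = X * fc M f := fc_intertwine_one h h X hX f

/-- If `X` is killed by `M` then `f(M) X = 0` whenever `f 0 = 0`. -/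
theorem fc_mul_eq_zero (h : M.IsHermitian) {f : ℝ → ℂ} (hf : f 0 = 0) {X : Matrix n m ℂ}
    (hX : M * X = 0) : fc M f * X = 0 := by
  have := fc_intertwine h (B := (0 : Matrix m m ℂ)) Matrix.isHermitian_zero X 0 (by simpa using hX) f
  rw [this, show (fun x : ℝ => f (0 * x)) = fun _ => 0 by simp [hf], fc_zero, Matrix.mul_zero]

/-- A positive `R` with `Tr (Y R Yᴴ) = 0` satisfies `Y R = 0`. -/
theorem mul_eq_zero_of_trace {R : Matrix n n ℂ} (hR : R.PosSemidef) (Y : Matrix m n ℂ)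
    (h : (Y * R * Yᴴ).trace = 0) : Y * R = 0 := by
  set s := fc R (fun x => ((Real.sqrt x : ℝ) : ℂ)) with hs
  have hss : s * s = R := by
    rw [hs, fc_mul hR.isHermitian]
    conv_rhs => rw [← fc_id hR.isHermitian]
    refine fc_congr fun i => ?_
    rw [← Complex.ofReal_mul, Real.mul_self_sqrt (ev_nonneg hR i)]
  have hsh : sᴴ = s := fc_herm hR.isHermitian _
  have : Y * R * Yᴴ = (Y * s) * (Y * s)ᴴ := by
    rw [Matrix.conjTranspose_mul, hsh, ← hss]; simp only [Matrix.mul_assoc]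
  rw [this, Matrix.trace_mul_conjTranspose_self_eq_zero_iff] at h
  rw [← hss, ← Matrix.mul_assoc, h, Matrix.zero_mul]

end Spectral

/-! ### Complex powers, logarithms and the Klein inequality -/

section Powers
variable {n m : Type*} [Fintype n] [DecidableEq n] [Fintype m] [DecidableEq m]
variable {M : Matrix n n ℂ}

/-- The indicator function of a point. -/
noncomputable def ind (a x : ℝ) : ℂ := if x = a then 1 else 0

/-- The functional calculus as a sum over the distinct eigenvalues. -/
theorem fc_eq_sum_ind (g : ℝ → ℂ) :
    fc M g = ∑ a ∈ Finset.univ.image (ev M), g a • fc M (ind a) := by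
  simp only [fc, Finset.smul_sum, smul_smul, ind]
  rw [Finset.sum_comm]
  refine Finset.sum_congr rfl fun i _ => ?_
  rw [Finset.sum_eq_single (ev M i)]
  · simp
  · intro b _ hb; simp [Ne.symm hb]
  · intro h; exact absurd (Finset.mem_image_of_mem _ (Finset.mem_univ i)) h

theorem mul_fc_ind (h : M.IsHermitian) (a : ℝ) : M * fc M (ind a) = (a : ℂ) • fc M (ind a) := by
  conv_lhs => rw [← fc_id h]
  rw [fc_id h]
  nth_rewrite 1 [← fc_id h]
  rw [fc_mul h, fc_smul]
  refine fc_congr fun i => ?_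
  by_cases hi : ev M i = a <;> simp [ind, hi]

/-- The complex power `x ↦ x ^ z` on the positive reals, extended by `0` at `0`. -/
noncomputable def pw (z : ℂ) (x : ℝ) : ℂ := if x = 0 then 0 else Complex.exp (z * (Real.log x : ℝ))

theorem pw_mul (z w : ℂ) (x : ℝ) : pw z x * pw w x = pw (z + w) x := by
  by_cases hx : x = 0 <;> simp [pw, hx, ← Complex.exp_add, add_mul]

theorem pw_star (z : ℂ) (x : ℝ) : star (pw z x) = pw (star z) x := by
  by_cases hx : x = 0 <;> simp [pw, hx, ← Complex.exp_conj]

theorem pw_one {x : ℝ} (hx : 0 ≤ x) : pw 1 x = x := by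
  by_cases h : x = 0
  · simp [pw, h]
  · simp only [pw, h, if_false, one_mul]
    rw [← Complex.ofReal_exp, Real.exp_log (lt_of_le_of_ne hx (Ne.symm h))]

theorem pw_real (r : ℝ) (x : ℝ) : pw (r : ℂ) x = ((if x = 0 then 0 else Real.exp (r * Real.log x) : ℝ) : ℂ) := by
  by_cases hx : x = 0 <;> simp [pw, hx]

/-- Complex powers of a positive matrix, taken on its support. In particular `cp M 0` is the
support projection and `cp M (-1)` the pseudo-inverse. -/
noncomputable def cp (M : Matrix n n ℂ) (z : ℂ) : Matrix n n ℂ := fc M (pw z)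

/-- The logarithm of a positive matrix, set to `0` on the kernel. -/
noncomputable def lg (M : Matrix n n ℂ) : Matrix n n ℂ := fc M (fun x => (Real.log x : ℂ))

theorem cp_mul (h : M.PosSemidef) (z w : ℂ) : cp M z * cp M w = cp M (z + w) := by
  rw [cp, cp, fc_mul h.isHermitian]; simp only [pw_mul, cp]

theorem cp_star (h : M.PosSemidef) (z : ℂ) : (cp M z)ᴴ = cp M (star z) := by
  rw [cp, fc_star h.isHermitian]; simp only [pw_star, cp]

theorem cp_star_real (h : M.PosSemidef) (r : ℝ) : (cp M r)ᴴ = cp M r := by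
  rw [cp_star h]; simp

theorem cp_one (h : M.PosSemidef) : cp M 1 = M := by
  conv_rhs => rw [← fc_id h.isHermitian]
  exact fc_congr fun i => pw_one (ev_nonneg h i)

theorem cp_psd (h : M.PosSemidef) (r : ℝ) : (cp M r).PosSemidef := by
  refine fc_psd h.isHermitian fun i => ?_
  rw [pw_real, Complex.zero_le_real]
  split_ifs <;> positivity

theorem cp_mul_eq_zero (h : M.PosSemidef) (z : ℂ) {y : Matrix n m ℂ} (hy : M * y = 0) :
    cp M z * y = 0 := fc_mul_eq_zero h.isHermitian (by simp [pw]) hy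

theorem mul_eq_zero_of_cp (h : M.PosSemidef) (z : ℂ) {y : Matrix m n ℂ} (hy : y * cp M z = 0) :
    y * M = 0 := by
  have : y * cp M z * cp M (1 - z) = 0 := by rw [hy, Matrix.zero_mul]
  rwa [Matrix.mul_assoc, cp_mul h, add_sub_cancel, cp_one h] at this

theorem mul_cp_eq_zero (h : M.PosSemidef) (z : ℂ) {y : Matrix m n ℂ} (hy : y * M = 0) :
    y * cp M z = 0 := by
  have h1 : M * yᴴ = 0 := by
    have := congrArg Matrix.conjTranspose hy
    simpa [Matrix.conjTranspose_mul, h.isHermitian.eq] using this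
  have := congrArg Matrix.conjTranspose (cp_mul_eq_zero h (star z) h1)
  simpa [Matrix.conjTranspose_mul, cp_star h] using this

/-- Support inclusion: the kernel of `σ` is contained in the kernel of `R`. -/
def Supp (R σ : Matrix n n ℂ) : Prop := ∀ y : Matrix n n ℂ, σ * y = 0 → R * y = 0

theorem cp_mul_supp {R σ : Matrix n n ℂ} (hR : R.PosSemidef) (hσ : σ.PosSemidef) (h : Supp R σ)
    (z : ℂ) : cp R z * cp σ 0 = cp R z := by
  have h1 : σ * (1 - cp σ 0) = 0 := by
    nth_rewrite 1 [← cp_one hσ]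
    rw [Matrix.mul_sub, cp_mul hσ]; simp
  have := cp_mul_eq_zero hR z (h _ h1)
  rw [Matrix.mul_sub, Matrix.mul_one, sub_eq_zero] at this
  exact this.symm

theorem supp_mul_cp {R σ : Matrix n n ℂ} (hR : R.PosSemidef) (hσ : σ.PosSemidef) (h : Supp R σ)
    (z : ℂ) : cp σ 0 * cp R z = cp R z := by
  have := congrArg Matrix.conjTranspose (cp_mul_supp hR hσ h (star z))
  simpa [Matrix.conjTranspose_mul, cp_star hR, cp_star hσ] using this

/-- The overlaps `Tr (p_j q_i)` of the spectral projections of two Hermitian matrices. -/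
noncomputable def wt (σ R : Matrix n n ℂ) (j i : n) : ℝ := (sp σ j * sp R i).trace.re

theorem trace_mul_nonneg {P Q : Matrix n n ℂ} (hP : P.PosSemidef) (hQ : Q.PosSemidef) :
    0 ≤ (P * Q).trace := by
  set s := cp P ((1/2 : ℝ) : ℂ)
  have hs : sᴴ = s := cp_star_real hP _
  have hss : s * s = P := by
    rw [cp_mul hP, show ((1/2 : ℝ) : ℂ) + ((1/2 : ℝ) : ℂ) = 1 by push_cast; norm_num, cp_one hP]
  rw [← hss, Matrix.mul_assoc, Matrix.trace_mul_comm]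
  have := (hQ.mul_mul_conjTranspose_same s).trace_nonneg
  rwa [hs] at this

theorem wt_eq {σ R : Matrix n n ℂ} (hσ : σ.IsHermitian) (hR : R.IsHermitian) (j i : n) :
    (sp σ j * sp R i).trace = (wt σ R j i : ℂ) := by
  have := trace_mul_nonneg (sp_psd hσ j) (sp_psd hR i)
  rw [Complex.nonneg_iff] at this
  apply Complex.ext <;> simp [wt, this.2]

theorem wt_nonneg {σ R : Matrix n n ℂ} (hσ : σ.IsHermitian) (hR : R.IsHermitian) (j i : n) :
    0 ≤ wt σ R j i := by
  have := trace_mul_nonneg (sp_psd hσ j) (sp_psd hR i)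
  rw [Complex.nonneg_iff] at this
  exact this.1

theorem trace_fc_fc {σ R : Matrix n n ℂ} (hσ : σ.IsHermitian) (hR : R.IsHermitian)
    (f g : ℝ → ℂ) : (fc σ f * fc R g).trace =
      ∑ j, ∑ i, f (ev σ j) * g (ev R i) * (wt σ R j i : ℂ) := by
  simp only [fc, Matrix.sum_mul, Matrix.mul_sum, Matrix.trace_sum, Matrix.smul_mul,
    Matrix.mul_smul, Matrix.trace_smul, smul_eq_mul, wt_eq hσ hR]
  simp only [Finset.mul_sum]
  rw [Finset.sum_comm]
  refine Finset.sum_congr rfl fun j _ => Finset.sum_congr rfl fun i _ => by ring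

/-- If `ker σ ⊆ ker R`, eigenvectors of `σ` with eigenvalue `0` are orthogonal to those of `R`
with nonzero eigenvalue. -/
theorem wt_eq_zero {σ R : Matrix n n ℂ} (hσ : σ.IsHermitian) (hR : R.IsHermitian)
    (h : Supp R σ) {j i : n} (hj : ev σ j = 0) (hi : ev R i ≠ 0) : wt σ R j i = 0 := by
  have h1 : σ * sp σ j = 0 := by rw [mul_sp hσ, hj]; simp
  have h2 : sp R i * (R * sp σ j) = 0 := by rw [h _ h1, Matrix.mul_zero]
  rw [← Matrix.mul_assoc, sp_self_mul hR, Matrix.smul_mul, smul_eq_zero] at h2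
  have h3 : sp R i * sp σ j = 0 := h2.resolve_left (by exact_mod_cast hi)
  rw [wt, Matrix.trace_mul_comm, h3]; simp

theorem wt_sum_left {σ R : Matrix n n ℂ} (hσ : σ.IsHermitian) (hR : R.IsHermitian) (i : n) :
    ∑ j, wt σ R j i = 1 := by
  have : ((∑ j, wt σ R j i : ℝ) : ℂ) = 1 := by
    push_cast
    simp only [← wt_eq hσ hR]
    rw [← Matrix.trace_sum, ← Finset.sum_mul, sum_sp hσ, Matrix.one_mul, trace_sp hR]
  exact_mod_cast this

/-- Real version of `trace_fc_fc`. -/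
theorem re_trace_fc_fc {σ R : Matrix n n ℂ} (hσ : σ.IsHermitian) (hR : R.IsHermitian)
    (f g : ℝ → ℝ) : (fc σ (fun x => (f x : ℂ)) * fc R (fun x => (g x : ℂ))).trace.re =
      ∑ j, ∑ i, f (ev σ j) * g (ev R i) * wt σ R j i := by
  rw [trace_fc_fc hσ hR]
  norm_cast

/-- Klein's inequality. -/
theorem klein {α ω : Matrix n n ℂ} (hα : α.PosSemidef) (hω : ω.PosSemidef)
    (htr : α.trace = ω.trace) (h : Supp α ω) :
    (α * lg ω).trace.re ≤ (α * lg α).trace.re := by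
  have hα' := hα.isHermitian
  have hω' := hω.isHermitian
  have e0 : α.trace.re = ∑ j, ∑ i, ev α i * wt ω α j i := by
    have := re_trace_fc_fc hω' hα' (fun _ => 1) (fun x => x)
    simp only [Complex.ofReal_one, fc_one hω', Matrix.one_mul, fc_id hα'] at this
    simpa using this
  have e1 : ω.trace.re = ∑ j, ∑ i, ev ω j * wt ω α j i := by
    have := re_trace_fc_fc hω' hα' (fun x => x) (fun _ => 1)
    simp only [Complex.ofReal_one, fc_one hα', Matrix.mul_one, fc_id hω'] at this
    simpa using this
  have e2 : (α * lg ω).trace.re = ∑ j, ∑ i, Real.log (ev ω j) * ev α i * wt ω α j i := by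
    have := re_trace_fc_fc hω' hα' Real.log (fun x => x)
    rw [fc_id hα', Matrix.trace_mul_comm] at this
    exact this
  have e3 : (α * lg α).trace.re = ∑ j, ∑ i, (ev α i * Real.log (ev α i)) * wt ω α j i := by
    have := re_trace_fc_fc hω' hα' (fun _ => 1) (fun x => x * Real.log x)
    simp only [Complex.ofReal_one, fc_one hω', Matrix.one_mul, one_mul] at this
    rw [← this]
    nth_rewrite 1 [← fc_id hα']
    rw [lg, fc_mul hα']
    simp
  have e4 : 0 ≤ ∑ j, ∑ i, ((ev α i * Real.log (ev α i)) * wt ω α j i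
      - Real.log (ev ω j) * ev α i * wt ω α j i - (ev α i * wt ω α j i - ev ω j * wt ω α j i)) := by
    refine Finset.sum_nonneg fun j _ => Finset.sum_nonneg fun i _ => ?_
    have hw := wt_nonneg hω' hα' j i
    have hl := ev_nonneg hα i
    have hm := ev_nonneg hω j
    by_cases hi : ev α i = 0
    · rw [hi]; simp; positivity
    by_cases hj : ev ω j = 0
    · rw [wt_eq_zero hω' hα' h hj hi]; simp
    have hl' : 0 < ev α i := lt_of_le_of_ne hl (Ne.symm hi)
    have hm' : 0 < ev ω j := lt_of_le_of_ne hm (Ne.symm hj)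
    have := Real.log_le_sub_one_of_pos (div_pos hm' hl')
    rw [Real.log_div hj hi] at this
    have h5 : ev α i * (Real.log (ev ω j) - Real.log (ev α i)) ≤ ev ω j - ev α i := by
      calc _ ≤ ev α i * (ev ω j / ev α i - 1) := by gcongr
        _ = _ := by field_simp
    nlinarith [mul_le_mul_of_nonneg_right h5 hw]
  simp only [Finset.sum_sub_distrib] at e4
  rw [← e0, ← e1, ← e2, ← e3, htr] at e4
  linarith

/-- The functional calculus of a product of commuting matrices, for functions which turn products
of nonzero numbers into sums; `Z` annihilates both kernels. -/
theorem fc_prod {K P Z : Matrix n n ℂ} (hK : K.IsHermitian) (hP : P.IsHermitian)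
    (hKP : K * P = P * K) (hZK : Z * fc K (ind 0) = 0) (hZP : Z * fc P (ind 0) = 0)
    (f g h : ℝ → ℂ) (hf : ∀ x y, x ≠ 0 → y ≠ 0 → f (x * y) = g x + h y) :
    Z * fc (K * P) f = Z * (fc K g + fc P h) := by
  have hH : (K * P).IsHermitian := by
    rw [Matrix.IsHermitian, Matrix.conjTranspose_mul, hK.eq, hP.eq, hKP]
  have hXP : ∀ a, fc K (ind a) * P = P * fc K (ind a) := fun a => fc_comm hK hKP _
  have hX : ∀ a, fc (K * P) f * fc K (ind a) = fc K (ind a) * fc P (fun x => f (a * x)) := by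
    intro a
    refine fc_intertwine hH hP _ a ?_ f
    rw [Matrix.mul_assoc, ← hXP, ← Matrix.mul_assoc, mul_fc_ind hK, Matrix.smul_mul]
  have hone : (1 : Matrix n n ℂ) = ∑ a ∈ Finset.univ.image (ev K), fc K (ind a) := by
    have := fc_eq_sum_ind (M := K) (fun _ => 1)
    simpa [fc_one hK] using this
  have hcomm : ∀ a, fc K (ind a) * fc (K * P) f = fc (K * P) f * fc K (ind a) := by
    intro a
    symm
    refine fc_comm hH ?_ f
    rw [Matrix.mul_assoc, ← hXP, ← Matrix.mul_assoc, mul_fc_ind hK, ← Matrix.mul_assoc,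
      fc_comm hK rfl, mul_fc_ind hK]
  have term : ∀ a, Z * (fc K (ind a) * fc (K * P) f) =
      Z * (fc K (ind a) * (g a • 1 + fc P h)) := by
    intro a
    by_cases ha : a = 0
    · subst ha
      rw [← Matrix.mul_assoc, hZK, ← Matrix.mul_assoc, hZK]; simp
    rw [hcomm, hX]
    have e : fc P (fun x => f (a * x)) =
        (g a • 1 + fc P h) + (f 0 - g a - h 0) • fc P (ind 0) := by
      rw [← fc_one hP, fc_smul, fc_add, fc_smul, fc_add]
      refine fc_congr fun i => ?_
      by_cases hi : ev P i = 0
      · simp [hi, ind]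
      · simp [hi, ind, hf _ _ ha hi]
    have hz : Z * (fc K (ind a) * fc P (ind 0)) = 0 := by
      rw [← fc_comm hP (hXP a).symm, ← Matrix.mul_assoc, hZP, Matrix.zero_mul]
    rw [e, Matrix.mul_add, Matrix.mul_add, Matrix.mul_smul, Matrix.mul_smul, hz, smul_zero,
      add_zero]
  calc Z * fc (K * P) f = Z * (1 * fc (K * P) f) := by rw [Matrix.one_mul]
    _ = ∑ a ∈ Finset.univ.image (ev K), Z * (fc K (ind a) * fc (K * P) f) := by
        rw [hone, Matrix.sum_mul, Matrix.mul_sum]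
    _ = ∑ a ∈ Finset.univ.image (ev K), Z * (fc K (ind a) * (g a • 1 + fc P h)) := by
        simp only [term]
    _ = Z * (fc K g + fc P h) := by
        rw [← Matrix.mul_sum]
        simp only [Matrix.mul_add, Finset.sum_add_distrib, Matrix.mul_smul, Matrix.mul_one]
        rw [← fc_eq_sum_ind, ← Matrix.sum_mul, ← hone, Matrix.one_mul]

end Powers

/-! ### Conditional expectations -/

section CondExp
variable {n : Type*} [Fintype n] [DecidableEq n]

/-- A trace-preserving conditional expectation `E` onto the commutant of a star-closed set `G` of
matrices. -/
structure CE (n : Type*) [Fintype n] [DecidableEq n] where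
  /-- the conditional expectation -/
  E : Matrix n n ℂ →ₗ[ℂ] Matrix n n ℂ
  /-- the set whose commutant is the range of `E` -/
  G : Set (Matrix n n ℂ)
  star_mem : ∀ u ∈ G, uᴴ ∈ G
  mem' : ∀ u ∈ G, ∀ x, u * E x = E x * u
  tr' : ∀ x, (∀ u ∈ G, u * x = x * u) → ∀ y, (x * E y).trace = (x * y).trace

namespace CE
variable (F : CE n)

/-- Membership in the range algebra of a conditional expectation. -/
def N (x : Matrix n n ℂ) : Prop := ∀ u ∈ F.G, u * x = x * u

variable {F} {x y : Matrix n n ℂ}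

theorem N_E (x : Matrix n n ℂ) : F.N (F.E x) := fun u hu => F.mem' u hu x

theorem N.tr (hx : F.N x) (y : Matrix n n ℂ) : (x * F.E y).trace = (x * y).trace := F.tr' x hx y

theorem N.mul (hx : F.N x) (hy : F.N y) : F.N (x * y) := fun u hu => by
  rw [← Matrix.mul_assoc, hx u hu, Matrix.mul_assoc, hy u hu, Matrix.mul_assoc]

theorem N.add (hx : F.N x) (hy : F.N y) : F.N (x + y) := fun u hu => by
  rw [Matrix.mul_add, hx u hu, hy u hu, Matrix.add_mul]

theorem N.sub (hx : F.N x) (hy : F.N y) : F.N (x - y) := fun u hu => by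
  rw [Matrix.mul_sub, hx u hu, hy u hu, Matrix.sub_mul]

theorem N.smul (hx : F.N x) (c : ℂ) : F.N (c • x) := fun u hu => by
  rw [Matrix.mul_smul, hx u hu, Matrix.smul_mul]

theorem N_zero : F.N 0 := fun u _ => by simp

theorem N_one : F.N 1 := fun u _ => by simp

theorem N_sum {ι : Type*} (s : Finset ι) (f : ι → Matrix n n ℂ) (h : ∀ i ∈ s, F.N (f i)) :
    F.N (∑ i ∈ s, f i) := fun u hu => by
  rw [Matrix.mul_sum, Matrix.sum_mul]
  exact Finset.sum_congr rfl fun i hi => h i hi u hu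

theorem N.star (hx : F.N x) : F.N xᴴ := fun u hu => by
  have := congrArg Matrix.conjTranspose (hx _ (F.star_mem u hu))
  simpa [Matrix.conjTranspose_mul] using this.symm

theorem N.fc (hx : F.N x) (hh : x.IsHermitian) (f : ℝ → ℂ) : F.N (fc x f) := fun u hu =>
  (fc_comm hh (hx u hu).symm f).symm

theorem N.cp (hx : F.N x) (hh : x.PosSemidef) (z : ℂ) : F.N (cp x z) := hx.fc hh.isHermitian _

/-- `E y` is determined by its pairings with the range of `E`. -/
theorem eq_E {a y : Matrix n n ℂ} (ha : F.N a)
    (h : ∀ x, F.N x → (x * a).trace = (x * y).trace) : F.E y = a := by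
  have hd : F.N (F.E y - a) := (N_E y).sub ha
  have h1 := h _ hd.star
  have h2 := hd.star.tr y
  have h3 : ((F.E y - a)ᴴ * (F.E y - a)).trace = 0 := by
    rw [Matrix.mul_sub, Matrix.trace_sub, h1, h2, sub_self]
  rw [Matrix.trace_conjTranspose_mul_self_eq_zero_iff, sub_eq_zero] at h3
  exact h3

theorem E_fix (hx : F.N x) : F.E x = x := eq_E hx fun _ _ => rfl

theorem E_mul_left (hx : F.N x) (y : Matrix n n ℂ) : F.E (x * y) = x * F.E y :=
  eq_E (hx.mul (N_E y)) fun w hw => by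
    rw [← Matrix.mul_assoc, (hw.mul hx).tr, Matrix.mul_assoc]

theorem E_mul_right (hx : F.N x) (y : Matrix n n ℂ) : F.E (y * x) = F.E y * x :=
  eq_E ((N_E y).mul hx) fun w hw => by
    rw [← Matrix.mul_assoc, Matrix.trace_mul_comm, ← Matrix.mul_assoc, (hx.mul hw).tr,
      Matrix.mul_assoc, Matrix.trace_mul_comm, Matrix.mul_assoc]

theorem E_star (y : Matrix n n ℂ) : F.E yᴴ = (F.E y)ᴴ :=
  eq_E (N_E y).star fun w hw => by
    have := congrArg Star.star (hw.star.tr y)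
    rw [← Matrix.trace_conjTranspose, ← Matrix.trace_conjTranspose, Matrix.conjTranspose_mul,
      Matrix.conjTranspose_mul, Matrix.conjTranspose_conjTranspose] at this
    rw [Matrix.trace_mul_comm, this, Matrix.trace_mul_comm]

theorem E_herm (hy : y.IsHermitian) : (F.E y).IsHermitian := by
  rw [Matrix.IsHermitian, ← E_star, hy.eq]

theorem trace_E (y : Matrix n n ℂ) : (F.E y).trace = y.trace := by
  have := (N_one (F := F)).tr y
  simpa using this

/-- Cyclicity: `E (Y x) = E (x Y)` if `Y` commutes with the range of `E`. -/
theorem E_cyc {Y : Matrix n n ℂ} (hY : ∀ w, F.N w → Y * w = w * Y) (x : Matrix n n ℂ) :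
    F.E (Y * x) = F.E (x * Y) :=
  eq_E (N_E _) fun w hw => by
    rw [hw.tr, ← Matrix.mul_assoc, Matrix.trace_mul_comm, ← Matrix.mul_assoc, hY w hw,
      Matrix.mul_assoc]

theorem E_psd (hy : y.PosSemidef) : (F.E y).PosSemidef := by
  have hH : (F.E y).IsHermitian := E_herm hy.isHermitian
  set f : ℝ → ℝ := fun x => if x < 0 then 1 else 0 with hf
  have hP : F.N (fc (F.E y) (fun x => (f x : ℂ))) := (N_E y).fc hH _
  have h0 : (fc (F.E y) (fun x => (f x : ℂ))).PosSemidef := fc_psd hH fun i => by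
    rw [Complex.zero_le_real, hf]; dsimp only; split_ifs <;> norm_num
  have h1 := trace_mul_nonneg h0 hy
  rw [← hP.tr] at h1
  have h2 : (fc (F.E y) (fun x => (f x : ℂ)) * F.E y).trace =
      ((∑ i, f (ev (F.E y) i) * ev (F.E y) i : ℝ) : ℂ) := by
    nth_rewrite 2 [← fc_id hH]
    rw [fc_mul hH, trace_fc hH]; push_cast; rfl
  rw [h2, Complex.zero_le_real] at h1
  have h3 : ∀ i ∈ Finset.univ, f (ev (F.E y) i) * ev (F.E y) i ≤ 0 := by
    intro i _
    rw [hf]; dsimp only; split_ifs with h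
    · linarith
    · simp
  have h4 := (Finset.sum_eq_zero_iff_of_nonpos h3).1 (le_antisymm (Finset.sum_nonpos h3) h1)
  rw [← fc_id hH]
  refine fc_psd hH fun i => ?_
  rw [Complex.zero_le_real]
  by_contra hneg
  have := h4 i (Finset.mem_univ i)
  rw [hf] at this
  simp only [not_le] at hneg
  simp [hneg] at this
  linarith

/-- The support of a positive matrix is contained in that of its conditional expectation. -/
theorem supp_E (hy : y.PosSemidef) : Supp y (F.E y) := by
  intro z hz
  have hE := E_psd (F := F) hy
  have hH := hE.isHermitian
  set Q := LW.fc (F.E y) (ind 0) with hQ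
  have hQN : F.N Q := (N_E y).fc hH _
  have hQh : Qᴴ = Q := by
    rw [hQ, fc_star hH]; refine fc_congr fun i => ?_
    by_cases h : ev (F.E y) i = 0 <;> simp [ind, h]
  have hQQ : Q * Q = Q := by
    rw [hQ, fc_mul hH]; refine fc_congr fun i => ?_
    by_cases h : ev (F.E y) i = 0 <;> simp [ind, h]
  have h1 : (Q * y * Qᴴ).trace = 0 := by
    rw [hQh, Matrix.trace_mul_comm, ← Matrix.mul_assoc, hQQ, ← hQN.tr, Matrix.trace_mul_comm,
      hQ, mul_fc_ind hH]
    simp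
  have h2 := mul_eq_zero_of_trace hy Q h1
  have h3 : y * Q = 0 := by
    have := congrArg Matrix.conjTranspose h2
    simpa [Matrix.conjTranspose_mul, hQh, hy.isHermitian.eq] using this
  have h4 : LW.fc (F.E y) (fun x => 1 - ind 0 x) * z = 0 :=
    fc_mul_eq_zero hH (by simp [ind]) hz
  rw [← fc_sub, fc_one hH, Matrix.sub_mul, Matrix.one_mul, sub_eq_zero] at h4
  rw [h4, ← Matrix.mul_assoc, h3, Matrix.zero_mul]

end CE
end CondExp

/-! ### Scalar lemmas: partial fractions, logarithmic potentials, entire functions -/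

section Scalar
open Filter Topology

theorem pf_sum_zero {ι : Type*} [Fintype ι] (c : ι → ℂ) (x : ι → ℝ) (hx : ∀ k, 0 ≤ x k)
    (h : ∀ t : ℝ, 0 < t → ∑ k, c k / ((x k : ℂ) + t) = 0) : ∑ k, c k = 0 := by
  have h1 : Tendsto (fun t : ℝ => ∑ k, c k * ((t / (x k + t) : ℝ) : ℂ)) atTop (𝓝 (∑ k, c k * ((1:ℝ):ℂ))) := by
    refine tendsto_finsetSum _ fun k _ => ?_
    refine Tendsto.const_mul _ ?_
    refine (Complex.continuous_ofReal.tendsto _).comp ?_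
    have h2 : Tendsto (fun t : ℝ => 1 - x k / (x k + t)) atTop (𝓝 (1 - 0)) := by
      refine Tendsto.const_sub _ ?_
      exact Tendsto.const_div_atTop (tendsto_atTop_add_const_left _ _ tendsto_id) _
    rw [sub_zero] at h2
    refine h2.congr' ?_
    filter_upwards [eventually_gt_atTop 0] with t ht
    have : x k + t ≠ 0 := by have := hx k; positivity
    field_simp
    ring
  have h3 : Tendsto (fun t : ℝ => ∑ k, c k * ((t / (x k + t) : ℝ) : ℂ)) atTop (𝓝 0) := by
    refine tendsto_const_nhds.congr' ?_
    filter_upwards [eventually_gt_atTop 0] with t ht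
    have e : ∑ k, c k * ((t / (x k + t) : ℝ) : ℂ) = t * ∑ k, c k / ((x k : ℂ) + t) := by
      rw [Finset.mul_sum]
      refine Finset.sum_congr rfl fun k _ => ?_
      push_cast; ring
    rw [e, h t ht, mul_zero]
  have := tendsto_nhds_unique h1 h3
  simpa using this

/-- Partial fractions: a finite complex combination of the functions `t ↦ 1 / (x + t)` vanishing
for all `t > 0` pairs to zero with every function of `x`. -/
theorem partial_fractions {ι : Type*} [Fintype ι] (c : ι → ℂ) (x : ι → ℝ) (hx : ∀ k, 0 ≤ x k)
    (h : ∀ t : ℝ, 0 < t → ∑ k, c k / ((x k : ℂ) + t) = 0) (f : ℝ → ℂ) :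
    ∑ k, c k * f (x k) = 0 := by
  have mom : ∀ m : ℕ, ∀ t : ℝ, 0 < t → ∑ k, (c k * (x k : ℂ) ^ m) / ((x k : ℂ) + t) = 0 := by
    intro m
    induction m with
    | zero => simpa using h
    | succ m ih =>
      intro t ht
      have h0 := pf_sum_zero _ x hx ih
      have e : ∑ k, (c k * (x k : ℂ) ^ (m + 1)) / ((x k : ℂ) + t) =
          ∑ k, c k * (x k : ℂ) ^ m - t * ∑ k, (c k * (x k : ℂ) ^ m) / ((x k : ℂ) + t) := by
        rw [Finset.mul_sum, ← Finset.sum_sub_distrib]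
        refine Finset.sum_congr rfl fun k _ => ?_
        have : (x k : ℂ) + t ≠ 0 := by
          have h5 : x k + t ≠ 0 := by have := hx k; positivity
          exact_mod_cast h5
        field_simp
        ring
      rw [e, h0, ih t ht]; simp
  have mom' : ∀ m : ℕ, ∑ k, c k * (x k : ℂ) ^ m = 0 := fun m => pf_sum_zero _ x hx (mom m)
  set s : Finset ℂ := Finset.univ.image (fun k => (x k : ℂ)) with hs
  set p := Lagrange.interpolate s id (fun w => f w.re) with hp
  have hev : ∀ k, p.eval (x k : ℂ) = f (x k) := by
    intro k
    have := Lagrange.eval_interpolate_at_node (s := s) (v := id) (fun w : ℂ => f w.re)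
      (Function.injective_id.injOn) (i := (x k : ℂ))
      (Finset.mem_image_of_mem _ (Finset.mem_univ k))
    rw [hp]
    simpa only [id, Complex.ofReal_re] using this
  simp only [← hev, Polynomial.eval_eq_sum_range, Finset.mul_sum]
  rw [Finset.sum_comm]
  refine Finset.sum_eq_zero fun m _ => ?_
  have : ∑ k, c k * (p.coeff m * (x k : ℂ) ^ m) = p.coeff m * ∑ k, c k * (x k : ℂ) ^ m := by
    rw [Finset.mul_sum]; exact Finset.sum_congr rfl fun k _ => by ring
  rw [this, mom', mul_zero]

variable {ι : Type*} [Fintype ι]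

theorem hasDerivAt_logsum (p m l : ι → ℝ) (hp : ∀ k, p k ≠ 0 → 0 < m k ∧ 0 < l k) {t : ℝ}
    (ht : 0 ≤ t) :
    HasDerivAt (fun t => ∑ k, p k * Real.log (m k + t * l k)) (∑ k, p k * l k / (m k + t * l k)) t := by
  refine HasDerivAt.fun_sum fun k _ => ?_
  by_cases hk : p k = 0
  · simp only [hk, zero_mul, zero_div]; exact hasDerivAt_const _ _
  obtain ⟨h1, h2⟩ := hp k hk
  have h3 : HasDerivAt (fun t => m k + t * l k) (l k) t := by
    simpa using ((hasDerivAt_id t).mul_const (l k)).const_add (m k)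
  have h4 := (h3.log (by positivity)).const_mul (p k)
  rwa [← mul_div_assoc] at h4

theorem tendsto_logsum (p m l : ι → ℝ) (hp : ∀ k, p k ≠ 0 → 0 < m k ∧ 0 < l k) :
    Tendsto (fun t => ∑ k, p k * Real.log (m k + t * l k) - (∑ k, p k) * Real.log t) atTop
      (𝓝 (∑ k, p k * Real.log (l k))) := by
  simp only [Finset.sum_mul, ← Finset.sum_sub_distrib]
  refine tendsto_finsetSum _ fun k _ => ?_
  by_cases hk : p k = 0
  · simp [hk]
  obtain ⟨h1, h2⟩ := hp k hk
  have h3 : Tendsto (fun t : ℝ => m k / t + l k) atTop (𝓝 (0 + l k)) :=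
    (Tendsto.const_div_atTop tendsto_id _).add_const _
  rw [zero_add] at h3
  have h4 := ((Real.continuousAt_log h2.ne').tendsto.comp h3).const_mul (p k)
  refine h4.congr' ?_
  filter_upwards [eventually_gt_atTop 0] with t ht
  have e : m k + t * l k = t * (m k / t + l k) := by field_simp
  rw [e, Real.log_mul ht.ne' (by positivity)]
  simp only [Function.comp]
  ring

/-- Two logarithmic potentials whose derivatives are ordered and whose total variations over
`[0, ∞)` agree have equal derivatives. -/
theorem logsum_rigid (p m l p' m' l' : ι → ℝ) (hp : ∀ k, p k ≠ 0 → 0 < m k ∧ 0 < l k)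
    (hp' : ∀ k, p' k ≠ 0 → 0 < m' k ∧ 0 < l' k) (hsum : ∑ k, p k = ∑ k, p' k)
    (hle : ∀ t : ℝ, 0 < t →
      ∑ k, p' k * l' k / (m' k + t * l' k) ≤ ∑ k, p k * l k / (m k + t * l k))
    (hent : ∑ k, p k * Real.log (l k) - ∑ k, p k * Real.log (m k) =
      ∑ k, p' k * Real.log (l' k) - ∑ k, p' k * Real.log (m' k)) {t : ℝ} (ht : 0 < t) :
    ∑ k, p k * l k / (m k + t * l k) = ∑ k, p' k * l' k / (m' k + t * l' k) := by
  set K : ℝ → ℝ := fun t => ∑ k, p k * Real.log (m k + t * l k) -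
    ∑ k, p' k * Real.log (m' k + t * l' k) with hK
  have hd : ∀ t : ℝ, 0 ≤ t → HasDerivAt K (∑ k, p k * l k / (m k + t * l k) -
      ∑ k, p' k * l' k / (m' k + t * l' k)) t := fun t ht =>
    (hasDerivAt_logsum p m l hp ht).sub (hasDerivAt_logsum p' m' l' hp' ht)
  have hmono : MonotoneOn K (Set.Ici 0) := by
    refine monotoneOn_of_deriv_nonneg (convex_Ici 0)
      (fun t ht => (hd t ht).continuousAt.continuousWithinAt)
      (fun t ht => (hd t (interior_subset ht)).differentiableAt.differentiableWithinAt) ?_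
    intro t ht
    rw [interior_Ici] at ht
    rw [(hd t (le_of_lt ht)).deriv]
    have := hle t ht
    linarith
  have hlim : Tendsto K atTop (𝓝 (K 0)) := by
    have h1 := (tendsto_logsum p m l hp).sub (tendsto_logsum p' m' l' hp')
    have e0 : K 0 = ∑ k, p k * Real.log (l k) - ∑ k, p' k * Real.log (l' k) := by
      simp only [hK, zero_mul, add_zero]; linarith
    rw [e0]
    refine h1.congr fun t => ?_
    simp only [hK, hsum]; ring
  have hconst : ∀ s : ℝ, 0 ≤ s → K s = K 0 := by
    intro s hs
    refine le_antisymm (ge_of_tendsto hlim ?_) (hmono (Set.self_mem_Ici) hs hs)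
    filter_upwards [eventually_ge_atTop s] with r hr
    exact hmono hs (le_trans hs hr) hr
  have h5 : HasDerivAt K 0 t := by
    refine (hasDerivAt_const t (K 0)).congr_of_eventuallyEq ?_
    filter_upwards [eventually_gt_nhds ht] with s hs
    exact hconst s hs.le
  have := h5.unique (hd t ht.le)
  linarith

end Scalar

section Entire
variable {n : Type*} [Fintype n] [DecidableEq n]

/-- Matrix-valued functions with entire entries. -/
def Ent (f : ℂ → Matrix n n ℂ) : Prop := ∀ a b, Differentiable ℂ (fun z => f z a b)

theorem Ent.mul {f g : ℂ → Matrix n n ℂ} (hf : Ent f) (hg : Ent g) :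
    Ent (fun z => f z * g z) := fun a b => by
  simp only [Matrix.mul_apply]
  exact Differentiable.fun_sum fun k _ => (hf a k).mul (hg k b)

theorem Ent.const (M : Matrix n n ℂ) : Ent (fun _ => M) := fun _ _ => differentiable_const _

theorem Ent.cp (M : Matrix n n ℂ) {g : ℂ → ℂ} (hg : Differentiable ℂ g) :
    Ent (fun z => cp M (g z)) := fun a b => by
  simp only [LW.cp, fc, Matrix.sum_apply, Matrix.smul_apply, smul_eq_mul]
  refine Differentiable.fun_sum fun k _ => Differentiable.mul_const ?_ _
  by_cases hk : ev M k = 0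
  · simp [pw, hk]
  · simp only [pw, hk, if_false]
    fun_prop

/-- Entire matrix functions which agree on a vertical line are equal. -/
theorem Ent.ext {f g : ℂ → Matrix n n ℂ} (hf : Ent f) (hg : Ent g) (r : ℝ)
    (h : ∀ z : ℂ, z.re = r → f z = g z) (z : ℂ) : f z = g z := by
  ext a b
  have hfa : AnalyticOnNhd ℂ (fun z => f z a b) Set.univ := fun z _ => (hf a b).analyticAt z
  have hga : AnalyticOnNhd ℂ (fun z => g z a b) Set.univ := fun z _ => (hg a b).analyticAt z
  have hfreq : ∃ᶠ w in nhdsWithin (r : ℂ) {(r : ℂ)}ᶜ, f w a b = g w a b := by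
    have ht : Filter.Tendsto (fun k : ℕ => (r : ℂ) + ((1 / ((k : ℝ) + 1) : ℝ) : ℂ) * Complex.I)
        Filter.atTop (nhdsWithin (r : ℂ) {(r : ℂ)}ᶜ) := by
      refine tendsto_nhdsWithin_iff.2 ⟨?_, Filter.Eventually.of_forall fun k => ?_⟩
      · have h1 := (Complex.continuous_ofReal.tendsto _).comp
          (tendsto_one_div_add_atTop_nhds_zero_nat (𝕜 := ℝ))
        have h2 := (h1.mul_const Complex.I).const_add (r : ℂ)
        simpa using h2
      · have : ((k : ℂ) + 1) ≠ 0 := by exact_mod_cast Nat.succ_ne_zero k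
        simp [this]
    refine ht.frequently (Filter.Frequently.of_forall fun k => ?_)
    rw [h]
    simp
  have := hfa.eq_of_frequently_eq hga hfreq
  exact congrFun this z

end Entire

/-! ### Equality in the monotonicity of relative entropy -/

section Double
variable {n : Type*} [Fintype n] [DecidableEq n]

/-- The double operator sum `∑ k(μ_j, λ_i) p_j q_i` over the spectral resolutions of two Hermitian
matrices. -/
noncomputable def dbl (σ R : Matrix n n ℂ) (k : ℝ → ℝ → ℂ) : Matrix n n ℂ :=
  ∑ j, ∑ i, k (ev σ j) (ev R i) • (sp σ j * sp R i)

variable {σ R : Matrix n n ℂ}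

theorem dbl_congr {k k' : ℝ → ℝ → ℂ} (h : ∀ j i, k (ev σ j) (ev R i) = k' (ev σ j) (ev R i)) :
    dbl σ R k = dbl σ R k' := by
  simp only [dbl, h]

theorem dbl_prod (f g : ℝ → ℂ) : dbl σ R (fun μ l => f μ * g l) = fc σ f * fc R g := by
  simp only [dbl, fc, Matrix.sum_mul, Matrix.mul_sum, Matrix.smul_mul, Matrix.mul_smul, smul_smul,
    Finset.smul_sum]
  rw [Finset.sum_comm]
  simp only [mul_comm]

theorem mul_dbl (hσ : σ.IsHermitian) (k : ℝ → ℝ → ℂ) :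
    σ * dbl σ R k = dbl σ R (fun μ l => μ * k μ l) := by
  simp only [dbl, Matrix.mul_sum, Matrix.mul_smul, ← Matrix.mul_assoc, mul_sp hσ, Matrix.smul_mul,
    smul_smul]
  simp only [mul_comm]

theorem dbl_mul (hR : R.IsHermitian) (k : ℝ → ℝ → ℂ) :
    dbl σ R k * R = dbl σ R (fun μ l => l * k μ l) := by
  simp only [dbl, Matrix.sum_mul, Matrix.smul_mul, Matrix.mul_assoc, sp_self_mul hR,
    Matrix.mul_smul, smul_smul]
  simp only [mul_comm]

theorem dbl_add (k k' : ℝ → ℝ → ℂ) :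
    dbl σ R k + dbl σ R k' = dbl σ R (fun μ l => k μ l + k' μ l) := by
  simp only [dbl, add_smul, Finset.sum_add_distrib]

theorem dbl_smul (c : ℂ) (k : ℝ → ℝ → ℂ) :
    c • dbl σ R k = dbl σ R (fun μ l => c * k μ l) := by
  simp only [dbl, Finset.smul_sum, smul_smul]

theorem trace_dbl (hσ : σ.IsHermitian) (hR : R.IsHermitian) (k : ℝ → ℝ → ℂ) :
    (dbl σ R k).trace = ∑ j, ∑ i, k (ev σ j) (ev R i) * (wt σ R j i : ℂ) := by
  simp only [dbl, Matrix.trace_sum, Matrix.trace_smul, wt_eq hσ hR, smul_eq_mul]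

theorem CE.N_dbl {F : CE n} (hσ : σ.IsHermitian) (hR : R.IsHermitian) (h1 : F.N σ) (h2 : F.N R)
    (k : ℝ → ℝ → ℂ) : F.N (dbl σ R k) := by
  have e : dbl σ R k = ∑ a ∈ Finset.univ.image (ev R), fc σ (fun x => k x a) * fc R (ind a) := by
    simp only [← dbl_prod, dbl]
    symm
    rw [Finset.sum_comm]
    refine Finset.sum_congr rfl fun j _ => ?_
    rw [Finset.sum_comm]
    refine Finset.sum_congr rfl fun i _ => ?_
    rw [Finset.sum_eq_single (ev R i)]
    · simp [ind]
    · intro b _ hb; simp [ind, Ne.symm hb]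
    · intro h; exact absurd (Finset.mem_image_of_mem _ (Finset.mem_univ i)) h
  rw [e]
  exact CE.N_sum _ _ fun a _ => (h1.fc hσ _).mul (h2.fc hR _)

/-- The solution `Ξ` of `σ Ξ + t Ξ R = R`. -/
noncomputable def Xi (σ R : Matrix n n ℂ) (t : ℝ) : Matrix n n ℂ :=
  dbl σ R (fun μ l => ((l / (μ + t * l) : ℝ) : ℂ))

theorem Xi_eq (hσ : σ.PosSemidef) (hR : R.PosSemidef) {t : ℝ} (ht : 0 < t) :
    σ * Xi σ R t + (t : ℂ) • (Xi σ R t * R) = R := by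
  rw [Xi, mul_dbl hσ.isHermitian, dbl_mul hR.isHermitian, dbl_smul, dbl_add]
  have : R = dbl σ R (fun _ l => 1 * (l : ℂ)) := by
    rw [dbl_prod (fun _ => 1) (fun l => (l : ℂ)), fc_one hσ.isHermitian, fc_id hR.isHermitian,
      Matrix.one_mul]
  conv_rhs => rw [this]
  refine dbl_congr fun j i => ?_
  have hm := ev_nonneg hσ j
  have hl := ev_nonneg hR i
  norm_cast
  by_cases hi : ev R i = 0
  · simp [hi]
  · have : ev σ j + t * ev R i ≠ 0 := by
      have : 0 < ev R i := lt_of_le_of_ne hl (Ne.symm hi)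
      positivity
    field_simp

/-- Completing the square for the quadratic functional whose maximiser is `Ξ`. -/
theorem square_Xi (hσ : σ.IsHermitian) (hR : R.IsHermitian) {Ξ : Matrix n n ℂ} {t : ℝ}
    (hΞ : σ * Ξ + (t : ℂ) • (Ξ * R) = R) (X : Matrix n n ℂ) :
    ((X - Ξ)ᴴ * σ * (X - Ξ)).trace + t * ((X - Ξ) * R * (X - Ξ)ᴴ).trace =
      (Xᴴ * σ * X).trace + t * (X * R * Xᴴ).trace - (Xᴴ * R).trace - (R * X).trace
        + (Ξᴴ * R).trace := by
  have hΞ' : Ξᴴ * σ + (t : ℂ) • (R * Ξᴴ) = R := by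
    have := congrArg Matrix.conjTranspose hΞ
    simpa [Matrix.conjTranspose_mul, hσ.eq, hR.eq] using this
  have e1 : (Xᴴ * R).trace = (Xᴴ * σ * Ξ).trace + t * (Ξ * R * Xᴴ).trace := by
    conv_lhs => rw [← hΞ]
    rw [Matrix.mul_add, Matrix.trace_add, Matrix.mul_smul, Matrix.trace_smul, smul_eq_mul,
      Matrix.trace_mul_comm Xᴴ (Ξ * R), Matrix.mul_assoc Xᴴ]
  have e2 : (Ξᴴ * R).trace = (Ξᴴ * σ * Ξ).trace + t * (Ξ * R * Ξᴴ).trace := by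
    conv_lhs => rw [← hΞ]
    rw [Matrix.mul_add, Matrix.trace_add, Matrix.mul_smul, Matrix.trace_smul, smul_eq_mul,
      Matrix.trace_mul_comm Ξᴴ (Ξ * R), Matrix.mul_assoc Ξᴴ]
  have e3 : (R * X).trace = (Ξᴴ * σ * X).trace + t * (X * R * Ξᴴ).trace := by
    conv_lhs => rw [← hΞ']
    rw [Matrix.add_mul, Matrix.trace_add, Matrix.smul_mul, Matrix.trace_smul, smul_eq_mul,
      Matrix.trace_mul_comm (R * Ξᴴ) X, Matrix.mul_assoc X]
  rw [e1, e2, e3]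
  simp only [Matrix.conjTranspose_sub, Matrix.sub_mul, Matrix.mul_sub, Matrix.trace_sub]
  ring

theorem trace_Xi_mul (hσ : σ.IsHermitian) (hR : R.IsHermitian) (t : ℝ) :
    (Xi σ R t * R).trace =
      ((∑ j, ∑ i, wt σ R j i * ev R i * ev R i / (ev σ j + t * ev R i) : ℝ) : ℂ) := by
  rw [Xi, dbl_mul hR, trace_dbl hσ hR]
  push_cast
  refine Finset.sum_congr rfl fun j _ => Finset.sum_congr rfl fun i _ => ?_
  ring

variable {F : CE n}

/-- The deficit of the variational problem under `E`, as a sum of two squares. -/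
theorem Xi_gap (hσ : σ.PosSemidef) (hR : R.PosSemidef) {t : ℝ} (ht : 0 < t) :
    ((Xi (F.E σ) (F.E R) t - Xi σ R t)ᴴ * σ * (Xi (F.E σ) (F.E R) t - Xi σ R t)).trace +
      t * ((Xi (F.E σ) (F.E R) t - Xi σ R t) * R * (Xi (F.E σ) (F.E R) t - Xi σ R t)ᴴ).trace =
    (Xi σ R t * R).trace - (Xi (F.E σ) (F.E R) t * F.E R).trace := by
  have hσ0 := CE.E_psd (F := F) hσ
  have hR0 := CE.E_psd (F := F) hR
  have hX : F.N (Xi (F.E σ) (F.E R) t) :=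
    CE.N_dbl hσ0.isHermitian hR0.isHermitian (CE.N_E _) (CE.N_E _) _
  rw [square_Xi hσ.isHermitian hR.isHermitian (Xi_eq hσ hR ht)]
  have h0 := Xi_eq hσ0 hR0 ht
  set X := Xi (F.E σ) (F.E R) t
  have a1 : (Xᴴ * σ * X).trace = (Xᴴ * F.E σ * X).trace := by
    rw [Matrix.trace_mul_comm, Matrix.trace_mul_comm (Xᴴ * F.E σ), ← Matrix.mul_assoc,
      ← Matrix.mul_assoc, (hX.mul hX.star).tr]
  have a2 : (X * R * Xᴴ).trace = (X * F.E R * Xᴴ).trace := by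
    rw [Matrix.trace_mul_comm, Matrix.trace_mul_comm (X * F.E R), ← Matrix.mul_assoc,
      ← Matrix.mul_assoc, (hX.star.mul hX).tr]
  have a3 : (Xᴴ * R).trace = (Xᴴ * F.E R).trace := (hX.star.tr R).symm
  have a4 : (R * X).trace = (X * F.E R).trace := by rw [hX.tr, Matrix.trace_mul_comm]
  have e1 : (Xᴴ * F.E R).trace = (Xᴴ * F.E σ * X).trace + t * (X * F.E R * Xᴴ).trace := by
    nth_rewrite 1 [← h0]
    rw [Matrix.mul_add, Matrix.trace_add, Matrix.mul_smul, Matrix.trace_smul, smul_eq_mul,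
      Matrix.trace_mul_comm Xᴴ (X * _), Matrix.mul_assoc Xᴴ]
  have e2 : ((Xi σ R t)ᴴ * R).trace = (Xi σ R t * R).trace := by
    have h1 := congrArg star (trace_Xi_mul hσ.isHermitian hR.isHermitian t)
    rw [← Matrix.trace_conjTranspose, Matrix.conjTranspose_mul, hR.isHermitian.eq,
      Matrix.trace_mul_comm] at h1
    rw [h1, trace_Xi_mul hσ.isHermitian hR.isHermitian t]
    simp
  rw [a1, a2, a3, a4, e1, e2]
  ring

/-- The relative entropy of `R` and `σ` in terms of the overlaps. -/
theorem relent_sum (hσ : σ.PosSemidef) (hR : R.PosSemidef) :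
    (R * lg R).trace.re - (R * lg σ).trace.re =
      ∑ k : n × n, wt σ R k.1 k.2 * ev R k.2 * Real.log (ev R k.2) -
      ∑ k : n × n, wt σ R k.1 k.2 * ev R k.2 * Real.log (ev σ k.1) := by
  have hσ' := hσ.isHermitian
  have hR' := hR.isHermitian
  congr 1
  · have := re_trace_fc_fc hσ' hR' (fun _ => 1) (fun x => x * Real.log x)
    simp only [Complex.ofReal_one, fc_one hσ', Matrix.one_mul, one_mul] at this
    rw [Fintype.sum_prod_type]
    trans (fc R (fun x => ((x * Real.log x : ℝ) : ℂ))).trace.re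
    · nth_rewrite 1 [← fc_id hR']
      rw [lg, fc_mul hR']; simp
    · rw [this]
      exact Finset.sum_congr rfl fun j _ => Finset.sum_congr rfl fun i _ => by ring
  · have := re_trace_fc_fc hσ' hR' Real.log (fun x => x)
    rw [fc_id hR', Matrix.trace_mul_comm] at this
    rw [Fintype.sum_prod_type]
    refine Eq.trans this ?_
    exact Finset.sum_congr rfl fun j _ => Finset.sum_congr rfl fun i _ => by ring

theorem trace_sum (hσ : σ.PosSemidef) (hR : R.PosSemidef) :
    R.trace.re = ∑ k : n × n, wt σ R k.1 k.2 * ev R k.2 := by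
  have := re_trace_fc_fc hσ.isHermitian hR.isHermitian (fun _ => 1) (fun x => x)
  simp only [Complex.ofReal_one, fc_one hσ.isHermitian, Matrix.one_mul, fc_id hR.isHermitian] at this
  rw [Fintype.sum_prod_type, this]
  exact Finset.sum_congr rfl fun j _ => Finset.sum_congr rfl fun i _ => by ring

/-- Equality in the monotonicity of relative entropy forces equality of the optimisers. -/
theorem Xi_rigid (hσ : σ.PosSemidef) (hR : R.PosSemidef) (hs : Supp R σ)
    (hs0 : Supp (F.E R) (F.E σ))
    (hent : (R * lg R).trace.re - (R * lg σ).trace.re =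
      (F.E R * lg (F.E R)).trace.re - (F.E R * lg (F.E σ)).trace.re) {t : ℝ} (ht : 0 < t) :
    Xi σ R t * R = Xi (F.E σ) (F.E R) t * R := by
  have hσ0 := CE.E_psd (F := F) hσ
  have hR0 := CE.E_psd (F := F) hR
  have hpos : ∀ {σ R : Matrix n n ℂ} (_ : σ.PosSemidef) (_ : R.PosSemidef) (_ : Supp R σ)
      (k : n × n), wt σ R k.1 k.2 * ev R k.2 ≠ 0 → 0 < ev σ k.1 ∧ 0 < ev R k.2 := by
    intro σ R hσ hR hs k hk
    have h1 : ev R k.2 ≠ 0 := right_ne_zero_of_mul hk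
    have h2 : ev σ k.1 ≠ 0 := fun h0 => hk (by
      rw [wt_eq_zero hσ.isHermitian hR.isHermitian hs h0 h1, zero_mul])
    exact ⟨lt_of_le_of_ne (ev_nonneg hσ _) (Ne.symm h2), lt_of_le_of_ne (ev_nonneg hR _) (Ne.symm h1)⟩
  have hq : ∀ {σ R : Matrix n n ℂ} (_ : σ.PosSemidef) (_ : R.PosSemidef) (t : ℝ),
      (Xi σ R t * R).trace = ((∑ k : n × n, wt σ R k.1 k.2 * ev R k.2 * ev R k.2 /
        (ev σ k.1 + t * ev R k.2) : ℝ) : ℂ) := by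
    intro σ R hσ hR t
    rw [trace_Xi_mul hσ.isHermitian hR.isHermitian, Fintype.sum_prod_type]
  have hgap : ∀ {t : ℝ}, 0 < t → _ := fun {t} ht => Xi_gap (F := F) hσ hR ht
  have n1 : ∀ t : ℝ, 0 ≤ ((Xi (F.E σ) (F.E R) t - Xi σ R t)ᴴ * σ *
      (Xi (F.E σ) (F.E R) t - Xi σ R t)).trace := fun t =>
    (hσ.conjTranspose_mul_mul_same _).trace_nonneg
  have n2 : ∀ t : ℝ, 0 ≤ ((Xi (F.E σ) (F.E R) t - Xi σ R t) * R *
      (Xi (F.E σ) (F.E R) t - Xi σ R t)ᴴ).trace := fun t =>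
    (hR.mul_mul_conjTranspose_same _).trace_nonneg
  have hle : ∀ t : ℝ, 0 < t →
      ∑ k : n × n, wt (F.E σ) (F.E R) k.1 k.2 * ev (F.E R) k.2 * ev (F.E R) k.2 /
        (ev (F.E σ) k.1 + t * ev (F.E R) k.2) ≤
      ∑ k : n × n, wt σ R k.1 k.2 * ev R k.2 * ev R k.2 / (ev σ k.1 + t * ev R k.2) := by
    intro t ht
    have h1 := hgap ht
    rw [hq hσ hR, hq hσ0 hR0] at h1
    have h2 : (0 : ℂ) ≤ _ := add_nonneg (n1 t) (mul_nonneg (Complex.zero_le_real.2 ht.le) (n2 t))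
    rw [h1, ← Complex.ofReal_sub, Complex.zero_le_real] at h2
    linarith
  have heq := logsum_rigid (ι := n × n) _ _ _ _ _ _ (hpos hσ hR hs) (hpos hσ0 hR0 hs0)
    (by rw [← trace_sum hσ hR, ← trace_sum hσ0 hR0, CE.trace_E]) hle
    (by rw [← relent_sum hσ hR, ← relent_sum hσ0 hR0]; exact hent) ht
  have h1 := hgap ht
  rw [hq hσ hR, hq hσ0 hR0, heq, sub_self] at h1
  have h3 := (add_eq_zero_iff_of_nonneg (n1 t)
    (mul_nonneg (Complex.zero_le_real.2 ht.le) (n2 t))).1 h1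
  have h4 := (mul_eq_zero.1 h3.2).resolve_left (by exact_mod_cast ht.ne')
  have h5 := mul_eq_zero_of_trace hR _ h4
  rw [Matrix.sub_mul, sub_eq_zero] at h5
  exact h5.symm

/-- Passing from the resolvents to arbitrary functions of the ratio of eigenvalues. -/
theorem dbl_of_Xi {σ₀ R₀ Z : Matrix n n ℂ} (hσ : σ.PosSemidef) (hR : R.PosSemidef)
    (hσ₀ : σ₀.PosSemidef) (hR₀ : R₀.PosSemidef)
    (h : ∀ t : ℝ, 0 < t → Xi σ R t * Z = Xi σ₀ R₀ t * Z) (f : ℝ → ℂ) :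
    dbl σ R (fun μ l => if l = 0 then 0 else f (μ / l)) * Z =
      dbl σ₀ R₀ (fun μ l => if l = 0 then 0 else f (μ / l)) * Z := by
  ext a b
  have expand : ∀ (σ R : Matrix n n ℂ) (k : ℝ → ℝ → ℂ), (dbl σ R k * Z) a b =
      ∑ q : n × n, k (ev σ q.1) (ev R q.2) * (sp σ q.1 * sp R q.2 * Z) a b := by
    intro σ R k
    rw [Fintype.sum_prod_type, dbl]
    simp only [Matrix.sum_mul, Matrix.sum_apply, Matrix.smul_mul, Matrix.smul_apply, smul_eq_mul]
  have res : ∀ {σ R : Matrix n n ℂ} (_ : σ.PosSemidef) (_ : R.PosSemidef) (t : ℝ) (_ : 0 < t),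
      (Xi σ R t * Z) a b = ∑ q : n × n, (if ev R q.2 = 0 then 0 else
        (sp σ q.1 * sp R q.2 * Z) a b) / (((ev σ q.1 / ev R q.2 : ℝ) : ℂ) + t) := by
    intro σ R hσ hR t ht
    rw [Xi, expand]
    refine Finset.sum_congr rfl fun q _ => ?_
    by_cases hq : ev R q.2 = 0
    · simp [hq]
    · rw [if_neg hq]
      have hq' : (ev R q.2 : ℂ) ≠ 0 := by exact_mod_cast hq
      have h0 : 0 < ev R q.2 := lt_of_le_of_ne (ev_nonneg hR _) (Ne.symm hq)
      have h1 : (ev σ q.1 : ℂ) + t * ev R q.2 ≠ 0 := by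
        have : ev σ q.1 + t * ev R q.2 ≠ 0 := by have := ev_nonneg hσ q.1; positivity
        exact_mod_cast this
      have h2 : (ev σ q.1 : ℂ) + ev R q.2 * t ≠ 0 := by rwa [mul_comm (t : ℂ)] at h1
      push_cast
      have e : (ev σ q.1 : ℂ) / ev R q.2 + t = (ev σ q.1 + t * ev R q.2) / ev R q.2 := by
        field_simp
      rw [e]
      field_simp
  have key := partial_fractions (ι := (n × n) ⊕ (n × n))
    (Sum.elim (fun q => if ev R q.2 = 0 then 0 else (sp σ q.1 * sp R q.2 * Z) a b)
      (fun q => - (if ev R₀ q.2 = 0 then 0 else (sp σ₀ q.1 * sp R₀ q.2 * Z) a b)))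
    (Sum.elim (fun q => ev σ q.1 / ev R q.2) (fun q => ev σ₀ q.1 / ev R₀ q.2))
    (by
      rintro (q | q)
      · exact div_nonneg (ev_nonneg hσ _) (ev_nonneg hR _)
      · exact div_nonneg (ev_nonneg hσ₀ _) (ev_nonneg hR₀ _))
    (by
      intro t ht
      have := congrFun (congrFun (h t ht) a) b
      rw [res hσ hR t ht, res hσ₀ hR₀ t ht] at this
      simp only [Fintype.sum_sum_type, Sum.elim_inl, Sum.elim_inr, neg_div, Finset.sum_neg_distrib]
      rw [this]; ring) f
  simp only [Fintype.sum_sum_type, Sum.elim_inl, Sum.elim_inr, neg_mul,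
    Finset.sum_neg_distrib] at key
  rw [expand, expand]
  rw [add_neg_eq_zero] at key
  convert key using 1 <;>
  · refine Finset.sum_congr rfl fun q _ => ?_
    split_ifs <;> ring

theorem dbl_pw (σ R : Matrix n n ℂ) (z : ℂ) :
    dbl σ R (fun μ l => if l = 0 then 0 else pw (-z) (μ / l)) = cp σ (-z) * cp R z := by
  rw [cp, cp, ← dbl_prod]
  refine dbl_congr fun j i => ?_
  by_cases hi : ev R i = 0
  · simp [hi, pw]
  by_cases hj : ev σ j = 0
  · simp [hj, pw]
  have : ev σ j / ev R i ≠ 0 := div_ne_zero hj hi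
  simp only [hi, if_false, pw, this, hj]
  rw [← Complex.exp_add, Real.log_div hj hi]
  congr 1; push_cast; ring

/-- **Equality in the data processing inequality** (here for conditional expectations): all complex
powers of `R` are determined by those of `E R`, `E σ` and `σ`. -/
theorem ssa_eq (hσ : σ.PosSemidef) (hR : R.PosSemidef) (hs : Supp R σ)
    (hs0 : Supp (F.E R) (F.E σ))
    (hent : (R * lg R).trace.re - (R * lg σ).trace.re =
      (F.E R * lg (F.E R)).trace.re - (F.E R * lg (F.E σ)).trace.re) (z : ℂ) :
    cp R z = cp (F.E R) z * cp (F.E σ) (-z) * cp σ z := by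
  have hσ0 := CE.E_psd (F := F) hσ
  have hR0 := CE.E_psd (F := F) hR
  have h1 : ∀ z, cp σ (-z) * cp R z = cp (F.E σ) (-z) * cp (F.E R) z * cp R 0 := by
    intro z
    have h2 := dbl_of_Xi hσ hR hσ0 hR0 (fun t ht => Xi_rigid (F := F) hσ hR hs hs0 hent ht) (pw (-z))
    rw [dbl_pw, dbl_pw] at h2
    have h3 := congrArg (fun X => X * cp R (-1)) h2
    have h4 : R * cp R (-1) = cp R 0 := by
      nth_rewrite 1 [← cp_one hR]; rw [cp_mul hR]; simp
    rwa [Matrix.mul_assoc (_ * _) R, h4, Matrix.mul_assoc (_ * _) R, h4, Matrix.mul_assoc (cp σ _),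
      cp_mul hR, add_zero] at h3
  have h2 : ∀ z, cp R z = cp R 0 * (cp (F.E R) z * cp (F.E σ) (-z) * cp σ z) := by
    intro z
    have h3 := congrArg Matrix.conjTranspose (h1 (star z))
    simp only [Matrix.conjTranspose_mul, cp_star hR, cp_star hσ, cp_star hR0, cp_star hσ0,
      star_neg, star_star, star_zero] at h3
    have h4 := congrArg (· * cp σ z) h3
    simp only [Matrix.mul_assoc, cp_mul hσ, neg_add_cancel, cp_mul_supp hR hσ hs] at h4
    rw [h4]; simp only [Matrix.mul_assoc]
  refine Ent.ext (f := fun z => cp R z)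
    (g := fun z => cp (F.E R) z * cp (F.E σ) (-z) * cp σ z) (Ent.cp R differentiable_id)
    (((Ent.cp _ differentiable_id).mul (Ent.cp _ (by fun_prop))).mul (Ent.cp _ differentiable_id))
    (1/2) ?_ z
  intro z hz
  have hzz : z + star z = 1 := by
    apply Complex.ext <;> simp [hz]
    norm_num
  set W := cp (F.E R) z * cp (F.E σ) (-z) with hW
  have hWN : F.N W := ((CE.N_E R).cp hR0 _).mul ((CE.N_E σ).cp hσ0 _)
  clear_value W
  have hP := cp_star_real hR 0
  simp only [Complex.ofReal_zero] at hP
  have hPP : cp R 0 * cp R 0 = cp R 0 := by rw [cp_mul hR, add_zero]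
  have a1 : (W * cp σ z * (W * cp σ z)ᴴ).trace = R.trace := by
    have b1 : W * cp σ z * (W * cp σ z)ᴴ = W * σ * Wᴴ := by
      rw [Matrix.conjTranspose_mul, cp_star hσ, Matrix.mul_assoc W, ← Matrix.mul_assoc (cp σ z),
        cp_mul hσ, hzz, cp_one hσ, Matrix.mul_assoc]
    rw [b1, Matrix.trace_mul_comm, ← Matrix.mul_assoc, ← (hWN.star.mul hWN).tr, Matrix.mul_assoc,
      Matrix.trace_mul_comm, hW, Matrix.conjTranspose_mul, cp_star hσ0, cp_star hR0]
    have b2 : cp (F.E R) z * cp (F.E σ) (-z) * F.E σ * (cp (F.E σ) (star (-z)) * cp (F.E R) (star z))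
        = F.E R := by
      have b3 : cp (F.E σ) (-z) * F.E σ * cp (F.E σ) (star (-z)) = cp (F.E σ) 0 := by
        nth_rewrite 2 [← cp_one hσ0]
        rw [cp_mul hσ0, cp_mul hσ0]
        congr 1
        rw [star_neg, ← hzz]; ring
      calc _ = cp (F.E R) z * (cp (F.E σ) (-z) * F.E σ * cp (F.E σ) (star (-z))) *
            cp (F.E R) (star z) := by simp only [Matrix.mul_assoc]
        _ = F.E R := by
            rw [b3, cp_mul_supp hR0 hσ0 hs0, cp_mul hR0, hzz, cp_one hR0]
    rw [b2, CE.trace_E]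
  have a2 : (cp R 0 * (W * cp σ z) * (cp R 0 * (W * cp σ z))ᴴ).trace = R.trace := by
    rw [hW, ← h2 z, cp_star hR, cp_mul hR, hzz, cp_one hR]
  have h2z : cp R z = cp R 0 * (W * cp σ z) := by rw [hW]; exact h2 z
  set Y := W * cp σ z with hY
  clear_value Y
  have a3 : ((Y - cp R 0 * Y) * (Y - cp R 0 * Y)ᴴ).trace = 0 := by
    have c1 : (cp R 0 * Y * Yᴴ).trace = R.trace := by
      rw [← a2, Matrix.conjTranspose_mul, hP, ← Matrix.mul_assoc, Matrix.trace_mul_comm _ (cp R 0),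
        ← Matrix.mul_assoc, ← Matrix.mul_assoc, hPP]
    have c2 : (Y * (cp R 0 * Y)ᴴ).trace = R.trace := by
      rw [Matrix.conjTranspose_mul, hP, ← Matrix.mul_assoc, Matrix.trace_mul_comm _ (cp R 0),
        ← Matrix.mul_assoc, c1]
    rw [Matrix.conjTranspose_sub, Matrix.sub_mul, Matrix.mul_sub, Matrix.mul_sub, Matrix.trace_sub,
      Matrix.trace_sub, Matrix.trace_sub, a1, a2, c1, c2]
    ring
  rw [Matrix.trace_mul_conjTranspose_self_eq_zero_iff, sub_eq_zero] at a3
  rw [a3]; exact h2z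

end Double

/-! ### Commutation of marginals -/

section Slice
variable {n : Type*} [Fintype n] [DecidableEq n]

/-- A projection which preserves the Hilbert–Schmidt norm of `V` fixes `V`. -/
theorem proj_eq {P V : Matrix n n ℂ} (hP : Pᴴ = P) (hPP : P * P = P)
    (h : ((P * V) * (P * V)ᴴ).trace = (V * Vᴴ).trace) : P * V = V := by
  have c1 : (P * V * Vᴴ).trace = (V * Vᴴ).trace := by
    rw [← h, Matrix.conjTranspose_mul, hP, ← Matrix.mul_assoc, Matrix.trace_mul_comm _ P,
      ← Matrix.mul_assoc, ← Matrix.mul_assoc, hPP]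
  have c2 : (V * (P * V)ᴴ).trace = (V * Vᴴ).trace := by
    rw [Matrix.conjTranspose_mul, hP, ← Matrix.mul_assoc, Matrix.trace_mul_comm _ P,
      ← Matrix.mul_assoc, c1]
  have a3 : ((V - P * V) * (V - P * V)ᴴ).trace = 0 := by
    rw [Matrix.conjTranspose_sub, Matrix.sub_mul, Matrix.mul_sub, Matrix.mul_sub, Matrix.trace_sub,
      Matrix.trace_sub, Matrix.trace_sub, h, c1, c2]
    ring
  rw [Matrix.trace_mul_conjTranspose_self_eq_zero_iff, sub_eq_zero] at a3
  exact a3.symm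

theorem cp_zero_star {M : Matrix n n ℂ} (h : M.PosSemidef) : (cp M 0)ᴴ = cp M 0 := by
  rw [cp_star h, star_zero]

theorem half_half {M : Matrix n n ℂ} (h : M.PosSemidef) : cp M (1/2) * cp M (1/2) = M := by
  rw [cp_mul h, add_halves, cp_one h]

theorem half_star {M : Matrix n n ℂ} (h : M.PosSemidef) : (cp M (1/2))ᴴ = cp M (1/2) := by
  have := cp_star_real h (1/2)
  push_cast at this
  exact this

theorem CE.N_of_comm {F F' : CE n} (hc : ∀ x, F.E (F'.E x) = F'.E (F.E x)) {x : Matrix n n ℂ}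
    (hx : F.N x) : F.N (F'.E x) := by
  have : F'.E x = F.E (F'.E x) := by rw [hc, CE.E_fix hx]
  rw [this]; exact CE.N_E _

/-- For a recovery identity `R^z = E_b(R)^z E_b(σ)^{-z} σ^z` with `σ = E_c(R)`, the slices
`E_c (Y R)` factor as `X σ`, where `X` lies in the range of `E_b`, and `Xᴴ` acts on the range of `σ` as the
conjugate of `X` by `σ`. -/
theorem slice {b c : CE n} (hbc : ∀ x, b.E (c.E x) = c.E (b.E x)) {R : Matrix n n ℂ}
    (hR : R.PosSemidef)
    (hT : ∀ z, cp R z = cp (b.E R) z * cp (b.E (c.E R)) (-z) * cp (c.E R) z)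
    {Y : Matrix n n ℂ} (hY : Yᴴ = Y) (hYc : Y ∈ c.G) (hYb : b.N Y) :
    (c.E (Y * b.E R) * cp (b.E (c.E R)) (-1)) * c.E R = c.E (Y * R) ∧
    (c.E (Y * b.E R) * cp (b.E (c.E R)) (-1))ᴴ * cp (c.E R) (1/2) =
      cp (c.E R) (-1) * c.E (Y * R) * cp (c.E R) (1/2) ∧
    (c.E (Y * b.E R))ᴴ = c.E (Y * b.E R) ∧
    c.E (Y * b.E R) * cp (b.E (c.E R)) 0 = c.E (Y * b.E R) ∧
    cp (b.E (c.E R)) 0 * c.E (Y * b.E R) = c.E (Y * b.E R) := by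
  have hAB := CE.E_psd (F := c) hR
  have hAC := CE.E_psd (F := b) hR
  have hA := CE.E_psd (F := b) hAB
  have hAc : c.N (b.E (c.E R)) := by rw [hbc]; exact CE.N_E _
  have hABc : c.N (c.E R) := CE.N_E _
  have hYN : ∀ w, c.N w → Y * w = w * Y := fun w hw => hw Y hYc
  have hbAB : b.E (c.E R) = c.E (b.E R) := hbc R
  have hsupp : Supp (b.E R) (b.E (c.E R)) := by rw [hbAB]; exact CE.supp_E hAC
  set σ := c.E R with hσdef
  set ω := b.E σ with hωdef
  set T := b.E R with hTdef
  set α := c.E (Y * T) with hα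
  have hαh : αᴴ = α := by
    rw [hα, ← CE.E_star, Matrix.conjTranspose_mul, hY, hAC.isHermitian.eq, CE.E_cyc hYN]
  have hαP : α * cp ω 0 = α := by
    rw [hα, ← CE.E_mul_right (hAc.cp hA 0), Matrix.mul_assoc]
    congr 2
    have := cp_mul_supp hAC hA hsupp 1
    rwa [cp_one hAC] at this
  have hPα : cp ω 0 * α = α := by
    have := congrArg Matrix.conjTranspose hαP
    rwa [Matrix.conjTranspose_mul, hαh, cp_zero_star hA] at this
  -- the slice identity for every complex power
  have hz : ∀ z, cp σ z * (cp ω (-z) * (α * cp ω (-1)) * cp ω z) * cp σ (1 - z) = c.E (Y * R) := by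
    intro z
    have h1 : cp R z = cp σ z * cp ω (-z) * cp T z := by
      have := congrArg Matrix.conjTranspose (hT (star z))
      rw [cp_star hR, star_star] at this
      rw [this]
      simp only [Matrix.conjTranspose_mul, cp_star hAC, cp_star hA, cp_star hAB, star_neg,
        star_star, Matrix.mul_assoc]
    have h2 : R = (cp σ z * cp ω (-z)) * T * (cp ω (-1) * cp ω z * cp σ (1 - z)) := by
      have : R = cp R z * cp R (1 - z) := by rw [cp_mul hR, add_sub_cancel, cp_one hR]
      rw [h1, hT (1 - z)] at this
      nth_rewrite 1 [this]
      have e1 : cp T z * cp T (1 - z) = T := by rw [cp_mul hAC, add_sub_cancel, cp_one hAC]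
      have e2 : cp ω (-(1 - z)) = cp ω (-1) * cp ω z := by
        rw [cp_mul hA]; congr 1; ring
      rw [e2]
      calc _ = (cp σ z * cp ω (-z)) * (cp T z * cp T (1 - z)) *
            (cp ω (-1) * cp ω z * cp σ (1 - z)) := by simp only [Matrix.mul_assoc]
        _ = _ := by rw [e1]
    have hL : c.N (cp σ z * cp ω (-z)) := (hABc.cp hAB _).mul (hAc.cp hA _)
    have hRt : c.N (cp ω (-1) * cp ω z * cp σ (1 - z)) :=
      ((hAc.cp hA _).mul (hAc.cp hA _)).mul (hABc.cp hAB _)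
    have h3 : Y * R = (cp σ z * cp ω (-z)) * (Y * T) * (cp ω (-1) * cp ω z * cp σ (1 - z)) := by
      calc Y * R = Y * ((cp σ z * cp ω (-z)) * T * (cp ω (-1) * cp ω z * cp σ (1 - z))) := by
            rw [← h2]
        _ = (Y * (cp σ z * cp ω (-z))) * T * (cp ω (-1) * cp ω z * cp σ (1 - z)) := by
            simp only [Matrix.mul_assoc]
        _ = _ := by rw [hYN _ hL]; simp only [Matrix.mul_assoc]
    rw [h3, CE.E_mul_right hRt, CE.E_mul_left hL, ← hα]
    simp only [Matrix.mul_assoc]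
  set X := α * cp ω (-1) with hX
  have hXb : b.N X :=
    (CE.N_of_comm hbc (hYb.mul (CE.N_E _))).mul ((CE.N_E _).cp hA _)
  have hXs : X * σ = c.E (Y * R) := by
    have h1 := hT 1
    rw [cp_one hR, cp_one hAC, cp_one hAB] at h1
    have h2 : Y * R = (Y * T) * (cp ω (-1) * σ) := by
      nth_rewrite 1 [h1]; simp only [Matrix.mul_assoc]
    rw [h2, CE.E_mul_right ((hAc.cp hA _).mul hABc), ← hα, hX, Matrix.mul_assoc]
  have hch : (X * σ)ᴴ = X * σ := by
    rw [hXs, ← CE.E_star, Matrix.conjTranspose_mul, hY, hR.isHermitian.eq, CE.E_cyc hYN]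
  have hσ0 : σ * cp σ 0 = σ := by
    nth_rewrite 1 [← cp_one hAB]; rw [cp_mul hAB, add_zero, cp_one hAB]
  have hPc : cp σ 0 * (X * σ) = X * σ := by
    have h1 : (X * σ) * cp σ 0 = X * σ := by rw [Matrix.mul_assoc, hσ0]
    have := congrArg Matrix.conjTranspose h1
    rwa [Matrix.conjTranspose_mul, hch, cp_zero_star hAB] at this
  have hXP : X * cp ω 0 = X := by rw [hX, Matrix.mul_assoc, cp_mul hA, add_zero]
  have hPX : cp ω 0 * X = X := by rw [hX, ← Matrix.mul_assoc, hPα]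
  rw [← hXs] at hz
  refine ⟨hXs, ?_, hαh, hαP, hPα⟩
  have hXω : ∀ x, b.N x → (x * ω).trace = (x * σ).trace := fun x hx => hx.tr σ
  have hωb : b.N ω := CE.N_E _
  clear_value X ω σ
  have main := Ent.ext (f := fun z => cp ω (-z) * X * cp ω z * cp σ (1/2))
    (g := fun z => cp σ (-z) * (X * cp σ (1/2)) * cp σ z)
    ((((Ent.cp _ (by fun_prop)).mul (Ent.const _)).mul (Ent.cp _ differentiable_id)).mul
      (Ent.const _))
    (((Ent.cp _ (by fun_prop)).mul (Ent.const _)).mul (Ent.cp _ differentiable_id)) 0 ?_ 1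
  · -- at `z = 1` the left conjugate of `X` is `Xᴴ`
    have h1 : Xᴴ = cp ω (-1) * X * cp ω 1 := by
      rw [hX, Matrix.conjTranspose_mul, hαh, cp_star hA, Matrix.mul_assoc (cp ω (-1)),
        Matrix.mul_assoc α, cp_mul hA]
      simp [hαP]
    rw [h1, main, ← hXs]
    have h2 : cp σ (1/2) * cp σ 1 = σ * cp σ (1/2) := by
      nth_rewrite 3 [← cp_one hAB]; rw [cp_mul hAB, cp_mul hAB, add_comm]
    simp only [Matrix.mul_assoc, h2]
  intro z hz0
  have hzs : star z = -z := by apply Complex.ext <;> simp [hz0]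
  set V := cp ω (-z) * X * cp ω z * cp σ (1/2) with hV
  have hPV : cp σ 0 * V = cp σ (-z) * (X * cp σ (1/2)) * cp σ z := by
    have h1 := congrArg (fun W => cp σ (-z) * W * cp σ (z - 1/2)) (hz z)
    have e1 : cp σ (1 - z) * cp σ (z - 1/2) = cp σ (1/2) := by
      rw [cp_mul hAB]; congr 1; ring
    have e2 : cp σ (-z) * cp σ z = cp σ 0 := by rw [cp_mul hAB]; simp
    have e3 : σ * cp σ (z - 1/2) = cp σ (1/2) * cp σ z := by
      nth_rewrite 1 [← cp_one hAB]
      rw [cp_mul hAB, cp_mul hAB]; congr 1; ring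
    calc cp σ 0 * V = cp σ (-z) * (cp σ z * (cp ω (-z) * X * cp ω z) * cp σ (1 - z))
          * cp σ (z - 1/2) := by
          rw [← e2, hV, ← e1]; simp only [Matrix.mul_assoc]
      _ = cp σ (-z) * (X * σ) * cp σ (z - 1/2) := h1
      _ = _ := by simp only [Matrix.mul_assoc, e3]
  have hn0 : (X * σ * Xᴴ).trace = (X * ω * Xᴴ).trace := by
    rw [Matrix.trace_mul_comm, Matrix.trace_mul_comm (X * ω), ← Matrix.mul_assoc,
      ← Matrix.mul_assoc, hXω _ (hXb.star.mul hXb)]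
  have hn1 : (V * Vᴴ).trace = (X * ω * Xᴴ).trace := by
    have hAz : b.N (cp ω (-z) * X * cp ω z) :=
      ((hωb.cp hA _).mul hXb).mul (hωb.cp hA _)
    have h1 : V * Vᴴ = (cp ω (-z) * X * cp ω z) * σ * (cp ω (-z) * X * cp ω z)ᴴ := by
      rw [hV, Matrix.conjTranspose_mul, half_star hAB]
      calc _ = (cp ω (-z) * X * cp ω z) * (cp σ (1/2) * cp σ (1/2)) *
            (cp ω (-z) * X * cp ω z)ᴴ := by simp only [Matrix.mul_assoc]
        _ = _ := by rw [half_half hAB]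
    have e1 : cp ω z * ω * cp ω (-z) = ω := by
      calc _ = cp ω z * cp ω 1 * cp ω (-z) := by rw [cp_one hA]
        _ = cp ω 1 := by rw [cp_mul hA, cp_mul hA]; congr 1; ring
        _ = _ := cp_one hA
    rw [h1, Matrix.trace_mul_comm, ← Matrix.mul_assoc, ← hXω _ (hAz.star.mul hAz),
      Matrix.mul_assoc, Matrix.trace_mul_comm]
    have h2 : cp ω (-z) * X * cp ω z * ω * (cp ω (-z) * X * cp ω z)ᴴ =
        cp ω (-z) * (X * ω * Xᴴ * cp ω z) := by
      simp only [Matrix.conjTranspose_mul, cp_star hA, star_neg, hzs, neg_neg]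
      calc _ = cp ω (-z) * (X * (cp ω z * ω * cp ω (-z)) * Xᴴ * cp ω z) := by
            simp only [Matrix.mul_assoc]
        _ = _ := by rw [e1]
    rw [h2, Matrix.trace_mul_comm, Matrix.mul_assoc (X * ω * Xᴴ), cp_mul hA, add_neg_cancel,
      Matrix.trace_mul_comm, ← Matrix.mul_assoc, ← Matrix.mul_assoc, hPX]
  have hn2 : ((cp σ 0 * V) * (cp σ 0 * V)ᴴ).trace = (X * ω * Xᴴ).trace := by
    rw [hPV, ← hn0]
    have e1 : cp σ (1/2) * cp σ z * (cp σ (-z) * cp σ (1/2)) = σ := by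
      calc _ = cp σ 1 := by rw [cp_mul hAB, cp_mul hAB, cp_mul hAB]; congr 1; ring
        _ = _ := cp_one hAB
    have h2 : cp σ (-z) * (X * cp σ (1/2)) * cp σ z * (cp σ (-z) * (X * cp σ (1/2)) * cp σ z)ᴴ =
        cp σ (-z) * (X * σ * Xᴴ * cp σ z) := by
      simp only [Matrix.conjTranspose_mul, cp_star hAB, half_star hAB, star_neg, hzs, neg_neg]
      calc _ = cp σ (-z) * (X * (cp σ (1/2) * cp σ z * (cp σ (-z) * (cp σ (1/2)))) * Xᴴ * cp σ z) := by
            rw [← cp_star hAB, half_star hAB]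
            simp only [Matrix.mul_assoc]
        _ = _ := by rw [e1]
    rw [h2, Matrix.trace_mul_comm, Matrix.mul_assoc (X * σ * Xᴴ), cp_mul hAB, add_neg_cancel,
      Matrix.trace_mul_comm, ← Matrix.mul_assoc, hPc]
  have := proj_eq (cp_zero_star hAB) (by rw [cp_mul hAB, add_zero]) (hn2.trans hn1.symm)
  rw [← hPV]; exact this.symm

/-- Two recovery identities for `R`, through `E_a` and `E_b`, force the two-party marginal `E_b R`
to commute with its own marginal `E_b E_c R`. -/
theorem commute_marginal {a b c d : CE n} (hac : ∀ x, a.E (c.E x) = c.E (a.E x))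
    (hbc : ∀ x, b.E (c.E x) = c.E (b.E x)) (hda : ∀ x, d.E (a.E x) = a.E (d.E x))
    (hdb : ∀ x, d.E (b.E x) = b.E (d.E x)) (hdc : ∀ x, d.E (c.E x) = c.E (d.E x))
    (hgc : ∀ u ∈ c.G, a.N u ∧ b.N u ∧ d.N u)
    (hcomm : ∀ x y, b.N x → c.N x → d.N x → a.N y → c.N y → d.N y → x * y = y * x)
    (hfaith : ∀ x, (∀ u ∈ c.G, uᴴ = u → c.E (u * x) = 0) → x = 0)
    {R : Matrix n n ℂ} (hR : R.PosSemidef) (hRd : d.N R)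
    (hTa : ∀ z, cp R z = cp (a.E R) z * cp (a.E (c.E R)) (-z) * cp (c.E R) z)
    (hTb : ∀ z, cp R z = cp (b.E R) z * cp (b.E (c.E R)) (-z) * cp (c.E R) z) :
    b.E R * b.E (c.E R) = b.E (c.E R) * b.E R := by
  have hσ := CE.E_psd (F := c) hR
  have hA := CE.E_psd (F := b) hσ
  have hB := CE.E_psd (F := a) hσ
  rw [← sub_eq_zero]
  refine hfaith _ fun Y hYc hY => ?_
  obtain ⟨hYa, hYb, hYd⟩ := hgc Y hYc
  obtain ⟨b1, b2, -, -, -⟩ := slice hac hR hTa hY hYc hYa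
  obtain ⟨a1, a2, hαh, hαP, hPα⟩ := slice hbc hR hTb hY hYc hYb
  have hAc : c.N (b.E (c.E R)) := by rw [hbc]; exact CE.N_E _
  have hBc : c.N (a.E (c.E R)) := by rw [hac]; exact CE.N_E _
  have hσd : d.N (c.E R) := CE.N_of_comm hdc hRd
  have hAd : d.N (b.E (c.E R)) := CE.N_of_comm hdb hσd
  have hBd : d.N (a.E (c.E R)) := CE.N_of_comm hda hσd
  have hXb : b.N (c.E (Y * b.E R) * cp (b.E (c.E R)) (-1)) :=
    (CE.N_of_comm hbc (hYb.mul (CE.N_E _))).mul ((CE.N_E _).cp hA _)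
  have hXc : c.N (c.E (Y * b.E R) * cp (b.E (c.E R)) (-1)) := (CE.N_E _).mul (hAc.cp hA _)
  have hXd : d.N (c.E (Y * b.E R) * cp (b.E (c.E R)) (-1)) :=
    (CE.N_of_comm hdc (hYd.mul (CE.N_of_comm hdb hRd))).mul (hAd.cp hA _)
  have hZa : a.N (c.E (Y * a.E R) * cp (a.E (c.E R)) (-1)) :=
    (CE.N_of_comm hac (hYa.mul (CE.N_E _))).mul ((CE.N_E _).cp hB _)
  have hZc : c.N (c.E (Y * a.E R) * cp (a.E (c.E R)) (-1)) := (CE.N_E _).mul (hBc.cp hB _)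
  have hZd : d.N (c.E (Y * a.E R) * cp (a.E (c.E R)) (-1)) :=
    (CE.N_of_comm hdc (hYd.mul (CE.N_of_comm hda hRd))).mul (hBd.cp hB _)
  set α := c.E (Y * b.E R) with hα
  set ω := b.E (c.E R) with hω
  set X := α * cp ω (-1) with hX
  set Z := c.E (Y * a.E R) * cp (a.E (c.E R)) (-1) with hZ
  set σ := c.E R with hσdef
  set m := cp σ (1/2) with hm
  have hmm : m * m = σ := half_half hσ
  have hmh : mᴴ = m := half_star hσ
  have hz3 : ∀ x, b.N x → b.E (x * σ) = x * ω := fun x hx => CE.E_mul_left hx _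
  clear_value X Z m
  have hXZ : X * m = Z * m := by
    have h1 : (X - Z) * σ = 0 := by rw [Matrix.sub_mul, a1, b1, sub_self]
    have := mul_cp_eq_zero hσ (1/2) h1
    rwa [Matrix.sub_mul, sub_eq_zero, ← hm] at this
  have hXZ' : Xᴴ * m = Zᴴ * m := a2.trans b2.symm
  have hx : Xᴴ * m = m * (cp σ (-(3/2)) * c.E (Y * R) * m) := by
    rw [a2, ← Matrix.mul_assoc, ← Matrix.mul_assoc, hm, cp_mul hσ]
    congr 3; norm_num
  have hXZc : Xᴴ * Z = Z * Xᴴ := hcomm _ _ hXb.star hXc.star hXd.star hZa hZc hZd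
  -- normality of `X` on the range of `m`
  have hnorm : X * Xᴴ * m = Xᴴ * X * m := by
    calc X * Xᴴ * m = X * m * (cp σ (-(3/2)) * c.E (Y * R) * m) := by
          rw [Matrix.mul_assoc, hx, ← Matrix.mul_assoc]
      _ = Z * Xᴴ * m := by rw [hXZ, Matrix.mul_assoc, ← hx, Matrix.mul_assoc]
      _ = Xᴴ * X * m := by rw [← hXZc, Matrix.mul_assoc, ← hXZ, Matrix.mul_assoc]
  have hherm : X * σ = σ * Xᴴ := by
    have h1 : (X * σ)ᴴ = X * σ := by
      rw [a1, ← CE.E_star, Matrix.conjTranspose_mul, hY, hR.isHermitian.eq,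
        CE.E_cyc (fun w hw => hw Y hYc)]
    rw [← h1, Matrix.conjTranspose_mul, hσ.isHermitian.eq]
  have hzero : (X - Xᴴ) * σ = 0 := by
    have h1 : ((X - Xᴴ) * σ * (X - Xᴴ)ᴴ).trace = 0 := by
      have t1 : (X * σ * Xᴴ).trace = (Xᴴ * X * σ).trace := by
        rw [Matrix.trace_mul_comm, ← Matrix.mul_assoc]
      have t2 : (X * σ * X).trace = (Xᴴ * X * σ).trace := by
        rw [hherm, Matrix.mul_assoc, Matrix.trace_mul_comm]
      have t3 : (Xᴴ * σ * Xᴴ).trace = (Xᴴ * X * σ).trace := by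
        rw [Matrix.mul_assoc, ← hherm, ← Matrix.mul_assoc]
      have t4 : (Xᴴ * σ * X).trace = (Xᴴ * X * σ).trace := by
        rw [Matrix.trace_mul_comm, ← Matrix.mul_assoc, ← hmm, ← Matrix.mul_assoc, hnorm,
          Matrix.mul_assoc]
      rw [Matrix.conjTranspose_sub, Matrix.conjTranspose_conjTranspose]
      simp only [Matrix.sub_mul, Matrix.mul_sub, Matrix.trace_sub]
      rw [t1, t2, t3, t4]; ring
    exact mul_eq_zero_of_trace hσ _ h1
  have hz2 : (X - Xᴴ) * ω = 0 := by
    have := congrArg b.E hzero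
    rwa [hz3 _ (hXb.sub hXb.star), map_zero] at this
  have hαω : α = cp ω (-1) * α * ω := by
    rw [Matrix.sub_mul, sub_eq_zero, hX, Matrix.conjTranspose_mul, hαh, cp_star hA,
      Matrix.mul_assoc α] at hz2
    nth_rewrite 2 [← cp_one hA] at hz2
    rw [cp_mul hA, neg_add_cancel, hαP] at hz2
    nth_rewrite 1 [hz2]
    simp
  have hcom : ω * α = α * ω := by
    nth_rewrite 1 [hαω]
    nth_rewrite 1 [← cp_one hA]
    rw [← Matrix.mul_assoc, ← Matrix.mul_assoc, cp_mul hA, add_neg_cancel, hPα]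
  have e1 : c.E (Y * (b.E R * ω)) = α * ω := by
    rw [← Matrix.mul_assoc, CE.E_mul_right hAc]
  have e2 : c.E (Y * (ω * b.E R)) = ω * α := by
    rw [← Matrix.mul_assoc, hAc Y hYc, Matrix.mul_assoc, CE.E_mul_left hAc]
  rw [Matrix.mul_sub, map_sub, e1, e2, hcom, sub_self]

end Slice

/-! ### The inequality for four abstract parties -/

section Main
variable {n : Type*} [Fintype n] [DecidableEq n]

/-- Four commuting conditional expectations, `a`, `b`, `c`, `d`, each standing for the normalized partial
trace over one of four tensor factors (re-embedded into the full matrix algebra), together with the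
consequences of the tensor product structure used below. -/
structure Parties (n : Type*) [Fintype n] [DecidableEq n] where
  /-- erases the first party -/
  a : CE n
  /-- erases the second party -/
  b : CE n
  /-- erases the third party -/
  c : CE n
  /-- erases the fourth party -/
  d : CE n
  ab : ∀ x, a.E (b.E x) = b.E (a.E x)
  ac : ∀ x, a.E (c.E x) = c.E (a.E x)
  ad : ∀ x, a.E (d.E x) = d.E (a.E x)
  bc : ∀ x, b.E (c.E x) = c.E (b.E x)
  bd : ∀ x, b.E (d.E x) = d.E (b.E x)
  cd : ∀ x, c.E (d.E x) = d.E (c.E x)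
  /-- the generators of the third factor act trivially on the others -/
  gc : ∀ u ∈ c.G, a.N u ∧ b.N u ∧ d.N u
  /-- slices along the third factor separate matrices -/
  faith : ∀ x, (∀ u ∈ c.G, uᴴ = u → c.E (u * x) = 0) → x = 0
  /-- operators on `AD` and on `BC` commute -/
  comm₁ : ∀ x y, b.N x → c.N x → a.N y → d.N y → x * y = y * x
  /-- operators on `A` and on `B` commute -/
  comm₂ : ∀ x y, b.N x → c.N x → d.N x → a.N y → c.N y → d.N y → x * y = y * x
  /-- operators on `BC` and on `BD` commute under the partial trace over `B` -/
  cyc : ∀ x y, a.N x → d.N x → a.N y → c.N y → b.E (x * y) = b.E (y * x)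

theorem Supp.trans {P Q R : Matrix n n ℂ} (h₁ : Supp P Q) (h₂ : Supp Q R) : Supp P R :=
  fun y hy => h₁ y (h₂ y hy)

theorem psd_of_commute {x y : Matrix n n ℂ} (hx : x.PosSemidef) (hy : y.PosSemidef)
    (h : x * y = y * x) : (x * y).PosSemidef := by
  have h1 : cp y (1/2) * x = x * cp y (1/2) := fc_comm hy.isHermitian h.symm _
  have h2 := hx.mul_mul_conjTranspose_same (cp y (1/2))
  rwa [half_star hy, h1, Matrix.mul_assoc, half_half hy] at h2

theorem CE.trace_E_mul {F : CE n} {x : Matrix n n ℂ} (hx : F.N x) (y : Matrix n n ℂ) :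
    (F.E y * x).trace = (y * x).trace := by
  rw [Matrix.trace_mul_comm, hx.tr, Matrix.trace_mul_comm]

/-- The recovery identity for `R`, with the four entropic quantities evaluated in a state `ρ` of which
`R` is a marginal. -/
theorem recovery {F F' : CE n} (hc : ∀ x, F.E (F'.E x) = F'.E (F.E x)) {R : Matrix n n ℂ}
    (hR : R.PosSemidef)
    (h : (R * lg R).trace.re - (R * lg (F'.E R)).trace.re =
      (R * lg (F.E R)).trace.re - (R * lg (F.E (F'.E R))).trace.re) (z : ℂ) :
    cp R z = cp (F.E R) z * cp (F.E (F'.E R)) (-z) * cp (F'.E R) z := by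
  have h1 := CE.E_psd (F := F') hR
  have h2 := CE.E_psd (F := F) hR
  have h3 := CE.E_psd (F := F) h1
  refine ssa_eq (F := F) h1 hR (CE.supp_E hR) ?_ ?_ z
  · rw [hc]; exact CE.supp_E h2
  · rw [h, lg, lg, CE.trace_E_mul ((CE.N_E _).fc h2.isHermitian _),
      CE.trace_E_mul ((CE.N_E _).fc h3.isHermitian _)]

variable (Q : Parties n) {ρ : Matrix n n ℂ}

/-- The consequence of the first two saturation conditions: there are positive operators on `AC` and on
`BC`, namely `K_A = ρ_AC ρ_A⁻¹` and `K_B = ρ_BC ρ_B⁻¹`, which map `ρ_AB` to `ρ_ABC`. -/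
theorem exists_K {R : Matrix n n ℂ} (hR : R.PosSemidef) (hRd : Q.d.N R)
    (hTa : ∀ z, cp R z = cp (Q.a.E R) z * cp (Q.a.E (Q.c.E R)) (-z) * cp (Q.c.E R) z)
    (hTb : ∀ z, cp R z = cp (Q.b.E R) z * cp (Q.b.E (Q.c.E R)) (-z) * cp (Q.c.E R) z) :
    (∃ K : Matrix n n ℂ, K.PosSemidef ∧ Q.b.N K ∧ Q.d.N K ∧ R = K * Q.c.E R) ∧
    (∃ K : Matrix n n ℂ, K.PosSemidef ∧ Q.a.N K ∧ Q.d.N K ∧ R = K * Q.c.E R) := by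
  have hσ := CE.E_psd (F := Q.c) hR
  have hσd : Q.d.N (Q.c.E R) := CE.N_of_comm (fun x => (Q.cd x).symm) hRd
  have hdb : ∀ x, Q.d.E (Q.b.E x) = Q.b.E (Q.d.E x) := fun x => (Q.bd x).symm
  have hda : ∀ x, Q.d.E (Q.a.E x) = Q.a.E (Q.d.E x) := fun x => (Q.ad x).symm
  have hdc : ∀ x, Q.d.E (Q.c.E x) = Q.c.E (Q.d.E x) := fun x => (Q.cd x).symm
  constructor
  · have hA := CE.E_psd (F := Q.b) hσ
    have hAC := CE.E_psd (F := Q.b) hR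
    have hcom := commute_marginal (a := Q.a) (b := Q.b) Q.ac Q.bc hda hdb hdc Q.gc Q.comm₂ Q.faith
      hR hRd hTa hTb
    have hcom' := fc_comm hA.isHermitian hcom.symm (pw (-1))
    refine ⟨Q.b.E R * cp (Q.b.E (Q.c.E R)) (-1),
      psd_of_commute hAC (by simpa using cp_psd hA (-1)) hcom'.symm,
      (CE.N_E _).mul ((CE.N_E _).cp hA _),
      (CE.N_of_comm hdb hRd).mul ((CE.N_of_comm hdb hσd).cp hA _), ?_⟩
    have := hTb 1
    rwa [cp_one hR, cp_one hAC, cp_one hσ] at this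
  · have hA := CE.E_psd (F := Q.a) hσ
    have hAC := CE.E_psd (F := Q.a) hR
    have hcom := commute_marginal (a := Q.b) (b := Q.a) Q.bc Q.ac hdb hda hdc
      (fun u hu => ⟨(Q.gc u hu).2.1, (Q.gc u hu).1, (Q.gc u hu).2.2⟩)
      (fun x y h1 h2 h3 h4 h5 h6 => (Q.comm₂ y x h4 h5 h6 h1 h2 h3).symm) Q.faith
      hR hRd hTb hTa
    have hcom' := fc_comm hA.isHermitian hcom.symm (pw (-1))
    refine ⟨Q.a.E R * cp (Q.a.E (Q.c.E R)) (-1),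
      psd_of_commute hAC (by simpa using cp_psd hA (-1)) hcom'.symm,
      (CE.N_E _).mul ((CE.N_E _).cp hA _),
      (CE.N_of_comm hda hRd).mul ((CE.N_of_comm hda hσd).cp hA _), ?_⟩
    have := hTa 1
    rwa [cp_one hR, cp_one hAC, cp_one hσ] at this

/-- The third saturation condition transfers the conditional operator `K_A` to an operator `K_D` on
`CD` which acts on `ρ_AD` in the same way. -/
theorem exists_KD {P KA KB : Matrix n n ℂ} (hP : P.PosSemidef) (hPc : Q.c.N P)
    (hA : KA.PosSemidef) (hAb : Q.b.N KA) (hB : KB.PosSemidef) (hBa : Q.a.N KB)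
    (hBd : Q.d.N KB) (hAB : KA * Q.d.E P = KB * Q.d.E P)
    (hT : ∀ z, cp P z = cp (Q.a.E P) z * cp (Q.a.E (Q.b.E P)) (-z) * cp (Q.b.E P) z) :
    ∃ KD : Matrix n n ℂ, KD.IsHermitian ∧ Q.a.N KD ∧ Q.b.N KD ∧
      KA * cp (Q.b.E P) (1/2) = cp (Q.b.E P) (1/2) * KD := by
  have hAD := CE.E_psd (F := Q.b) hP
  have hBD := CE.E_psd (F := Q.a) hP
  have hD := CE.E_psd (F := Q.a) hAD
  have hdP := CE.E_psd (F := Q.d) hP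
  have hDb : Q.b.N (Q.a.E (Q.b.E P)) := by rw [Q.ab]; exact CE.N_E _
  have hDc : Q.c.N (Q.a.E (Q.b.E P)) :=
    CE.N_of_comm (fun x => (Q.ac x).symm) (CE.N_of_comm (fun x => (Q.bc x).symm) hPc)
  have hADc : Q.c.N (Q.b.E P) := CE.N_of_comm (fun x => (Q.bc x).symm) hPc
  have hBDc : Q.c.N (Q.a.E P) := CE.N_of_comm (fun x => (Q.ac x).symm) hPc
  have hkey : KA * cp P (1/2) = KB * cp P (1/2) := by
    have h1 : (KA - KB) * Q.d.E P = 0 := by rw [Matrix.sub_mul, hAB, sub_self]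
    have h2 : Q.d.E P * (KA - KB) = 0 := by
      have := congrArg Matrix.conjTranspose h1
      simpa [Matrix.conjTranspose_mul, hdP.isHermitian.eq, hA.isHermitian.eq,
        hB.isHermitian.eq] using this
    have h3 : P * (KA - KB) = 0 := CE.supp_E hP _ h2
    have h4 : (KA - KB) * P = 0 := by
      have := congrArg Matrix.conjTranspose h3
      simpa [Matrix.conjTranspose_mul, hP.isHermitian.eq, hA.isHermitian.eq,
        hB.isHermitian.eq] using this
    have := mul_cp_eq_zero hP (1/2) h4
    rwa [Matrix.sub_mul, sub_eq_zero] at this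
  have hq : (cp (Q.a.E (Q.b.E P)) (-(1/2)))ᴴ = cp (Q.a.E (Q.b.E P)) (-(1/2)) := by
    have := cp_star_real hD (-(1/2)); push_cast at this; exact this
  have hT' : cp P (1/2) =
      cp (Q.b.E P) (1/2) * cp (Q.a.E (Q.b.E P)) (-(1/2)) * cp (Q.a.E P) (1/2) := by
    have := congrArg Matrix.conjTranspose (hT (1/2))
    rwa [Matrix.conjTranspose_mul, Matrix.conjTranspose_mul, half_star hP, half_star hAD,
      half_star hBD, hq, ← Matrix.mul_assoc] at this
  have hs0 : cp (Q.b.E P) (1/2) * cp (Q.a.E (Q.b.E P)) 0 = cp (Q.b.E P) (1/2) :=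
    cp_mul_supp hAD hD (CE.supp_E hAD) _
  have hqq : cp (Q.a.E (Q.b.E P)) (-(1/2)) * Q.a.E (Q.b.E P) * cp (Q.a.E (Q.b.E P)) (-(1/2)) =
      cp (Q.a.E (Q.b.E P)) 0 := by
    calc _ = cp (Q.a.E (Q.b.E P)) (-(1/2)) * cp (Q.a.E (Q.b.E P)) 1 *
          cp (Q.a.E (Q.b.E P)) (-(1/2)) := by rw [cp_one hD]
      _ = _ := by rw [cp_mul hD, cp_mul hD]; congr 1; norm_num
  have hsb : Q.b.N (cp (Q.b.E P) (1/2)) := (CE.N_E _).cp hAD _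
  have hqb : Q.b.N (cp (Q.a.E (Q.b.E P)) (-(1/2))) := hDb.cp hD _
  have hqa : Q.a.N (cp (Q.a.E (Q.b.E P)) (-(1/2))) := (CE.N_E _).cp hD _
  have hsB : cp (Q.b.E P) (1/2) * KB = KB * cp (Q.b.E P) (1/2) :=
    Q.comm₁ _ _ hsb (hADc.cp hAD _) hBa hBd
  have hqB : cp (Q.a.E (Q.b.E P)) (-(1/2)) * KB = KB * cp (Q.a.E (Q.b.E P)) (-(1/2)) :=
    Q.comm₁ _ _ hqb (hDc.cp hD _) hBa hBd
  have hbBD : Q.b.E (Q.a.E P) = Q.a.E (Q.b.E P) := (Q.ab P).symm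
  have hrr := half_half hBD
  set s := cp (Q.b.E P) (1/2)
  set q := cp (Q.a.E (Q.b.E P)) (-(1/2))
  set r := cp (Q.a.E P) (1/2)
  set D := Q.a.E (Q.b.E P)
  set W := Q.b.E (KB * Q.a.E P) with hW
  have hWh : Wᴴ = W := by
    rw [hW, ← CE.E_star, Matrix.conjTranspose_mul, hB.isHermitian.eq, hBD.isHermitian.eq]
    exact (Q.cyc _ _ hBa hBd (CE.N_E _) hBDc).symm
  have hWa : Q.a.N W := CE.N_of_comm Q.ab (hBa.mul (CE.N_E _))
  refine ⟨q * W * q, ?_, (hqa.mul hWa).mul hqa, (hqb.mul (CE.N_E _)).mul hqb, ?_⟩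
  · rw [Matrix.IsHermitian, Matrix.conjTranspose_mul, Matrix.conjTranspose_mul, hq, hWh,
      Matrix.mul_assoc]
  clear_value s q r D
  have h1 : KA * s * q * Q.a.E P = s * q * (KB * Q.a.E P) := by
    calc KA * s * q * Q.a.E P = (KA * cp P (1/2)) * r := by
          rw [hT', ← hrr]; simp only [Matrix.mul_assoc]
      _ = KB * s * q * r * r := by rw [hkey, hT']; simp only [Matrix.mul_assoc]
      _ = s * KB * q * r * r := by rw [← hsB]
      _ = s * (KB * q) * r * r := by simp only [Matrix.mul_assoc]
      _ = s * (q * KB) * r * r := by rw [← hqB]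
      _ = _ := by rw [← hrr]; simp only [Matrix.mul_assoc]
  have h2 := congrArg Q.b.E h1
  rw [CE.E_mul_left ((hAb.mul hsb).mul hqb), CE.E_mul_left (hsb.mul hqb), hbBD, ← hW] at h2
  calc KA * s = KA * (s * (q * D * q)) := by rw [hqq, hs0]
    _ = (KA * s * q * D) * q := by simp only [Matrix.mul_assoc]
    _ = _ := by rw [h2]; simp only [Matrix.mul_assoc]

/-- If the three saturation conditions hold, expressed through `Tr ρ log ρ_S`, then
`Tr ρ log ρ_ABC - Tr ρ log ρ_AB ≤ Tr ρ log ρ_CD - Tr ρ log ρ_D`. -/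
theorem abstract_main (hρ : ρ.PosSemidef)
    (h1 : (ρ * lg (Q.d.E ρ)).trace.re - (ρ * lg (Q.c.E (Q.d.E ρ))).trace.re =
      (ρ * lg (Q.a.E (Q.d.E ρ))).trace.re - (ρ * lg (Q.a.E (Q.c.E (Q.d.E ρ)))).trace.re)
    (h2 : (ρ * lg (Q.d.E ρ)).trace.re - (ρ * lg (Q.c.E (Q.d.E ρ))).trace.re =
      (ρ * lg (Q.b.E (Q.d.E ρ))).trace.re - (ρ * lg (Q.b.E (Q.c.E (Q.d.E ρ)))).trace.re)
    (h3 : (ρ * lg (Q.c.E ρ)).trace.re - (ρ * lg (Q.b.E (Q.c.E ρ))).trace.re =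
      (ρ * lg (Q.a.E (Q.c.E ρ))).trace.re - (ρ * lg (Q.a.E (Q.b.E (Q.c.E ρ)))).trace.re) :
    (ρ * lg (Q.d.E ρ)).trace.re - (ρ * lg (Q.c.E (Q.d.E ρ))).trace.re ≤
      (ρ * lg (Q.a.E (Q.b.E ρ))).trace.re - (ρ * lg (Q.a.E (Q.b.E (Q.c.E ρ)))).trace.re := by
  have hR := CE.E_psd (F := Q.d) hρ
  have hP := CE.E_psd (F := Q.c) hρ
  have hRd : Q.d.N (Q.d.E ρ) := CE.N_E _
  have hPc : Q.c.N (Q.c.E ρ) := CE.N_E _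
  have hdc : ∀ x, Q.d.E (Q.c.E x) = Q.c.E (Q.d.E x) := fun x => (Q.cd x).symm
  have hcb : ∀ x, Q.c.E (Q.b.E x) = Q.b.E (Q.c.E x) := fun x => (Q.bc x).symm
  have hca : ∀ x, Q.c.E (Q.a.E x) = Q.a.E (Q.c.E x) := fun x => (Q.ac x).symm
  have hda : ∀ x, Q.d.E (Q.a.E x) = Q.a.E (Q.d.E x) := fun x => (Q.ad x).symm
  have hdb : ∀ x, Q.d.E (Q.b.E x) = Q.b.E (Q.d.E x) := fun x => (Q.bd x).symm
  have hAB := CE.E_psd (F := Q.c) hR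
  have hABd : Q.d.N (Q.c.E (Q.d.E ρ)) := CE.N_of_comm hdc hRd
  have hAD := CE.E_psd (F := Q.b) hP
  have hADc : Q.c.N (Q.b.E (Q.c.E ρ)) := CE.N_of_comm hcb hPc
  have hD := CE.E_psd (F := Q.a) hAD
  have td : ∀ M : Matrix n n ℂ, M.PosSemidef → Q.d.N M →
      (Q.d.E ρ * lg M).trace = (ρ * lg M).trace := fun M hM hN =>
    CE.trace_E_mul (hN.fc hM.isHermitian _) _
  have tc : ∀ M : Matrix n n ℂ, M.PosSemidef → Q.c.N M →
      (Q.c.E ρ * lg M).trace = (ρ * lg M).trace := fun M hM hN =>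
    CE.trace_E_mul (hN.fc hM.isHermitian _) _
  have hTa := recovery (F := Q.a) (F' := Q.c) Q.ac hR (by
    rw [td _ hR hRd, td _ hAB hABd, td _ (CE.E_psd hR) (CE.N_of_comm hda hRd),
      td _ (CE.E_psd hAB) (CE.N_of_comm hda hABd), h1])
  have hTb := recovery (F := Q.b) (F' := Q.c) Q.bc hR (by
    rw [td _ hR hRd, td _ hAB hABd, td _ (CE.E_psd hR) (CE.N_of_comm hdb hRd),
      td _ (CE.E_psd hAB) (CE.N_of_comm hdb hABd), h2])
  have hTd := recovery (F := Q.a) (F' := Q.b) Q.ab hP (by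
    rw [tc _ hP hPc, tc _ hAD hADc, tc _ (CE.E_psd hP) (CE.N_of_comm hca hPc),
      tc _ hD (CE.N_of_comm hca hADc), h3])
  obtain ⟨⟨KA, hKA, hAb, hAd, hRA⟩, ⟨KB, hKB, hBa, hBd, hRB⟩⟩ := exists_K Q hR hRd hTa hTb
  obtain ⟨KD, hKD, hDa, hDb, hs⟩ := exists_KD Q hP hPc hKA hAb hKB hBa hBd
    (by rw [hdc, ← hRA, ← hRB]) hTd
  have hss := half_half hAD
  have hsh := half_star hAD
  -- `K_A` and `K_D` commute with `ρ_AD`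
  have hs' : cp (Q.b.E (Q.c.E ρ)) (1/2) * KA = KD * cp (Q.b.E (Q.c.E ρ)) (1/2) := by
    have := congrArg Matrix.conjTranspose hs
    rwa [Matrix.conjTranspose_mul, Matrix.conjTranspose_mul, hsh, hKA.isHermitian.eq, hKD.eq] at this
  have hAAD : Q.b.E (Q.c.E ρ) * KA = KA * Q.b.E (Q.c.E ρ) := by
    rw [← hss]
    set s := cp (Q.b.E (Q.c.E ρ)) (1/2)
    rw [Matrix.mul_assoc, hs', ← Matrix.mul_assoc, ← hs, Matrix.mul_assoc]
  have hAs : cp (Q.b.E (Q.c.E ρ)) (1/2) * KA = KA * cp (Q.b.E (Q.c.E ρ)) (1/2) :=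
    fc_comm hAD.isHermitian hAAD _
  have hDs : KD * cp (Q.b.E (Q.c.E ρ)) (1/2) = cp (Q.b.E (Q.c.E ρ)) (1/2) * KD := by
    rw [← hs', hAs, hs]
  have hKω : KD * Q.b.E (Q.c.E ρ) =
      cp (Q.b.E (Q.c.E ρ)) (1/2) * KA * (cp (Q.b.E (Q.c.E ρ)) (1/2))ᴴ := by
    rw [hsh, hs', Matrix.mul_assoc, hss]
  have hDAD : Q.b.E (Q.c.E ρ) * KD = KD * Q.b.E (Q.c.E ρ) := by
    rw [← hss]
    set s := cp (Q.b.E (Q.c.E ρ)) (1/2)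
    rw [Matrix.mul_assoc, ← hDs, ← Matrix.mul_assoc, ← hDs, Matrix.mul_assoc]
  have hDD : KD * Q.a.E (Q.b.E (Q.c.E ρ)) = Q.a.E (Q.b.E (Q.c.E ρ)) * KD := by
    rw [← CE.E_mul_left hDa, ← CE.E_mul_right hDa, hDAD]
  have hsuppAD : Supp ρ (Q.b.E (Q.c.E ρ)) := (CE.supp_E hρ).trans (CE.supp_E hP)
  -- functions of `K_A` and of `K_D` agree on `ρ`
  have hfun : ∀ f : ℝ → ℂ, ρ * fc KA f = ρ * fc KD f := by
    intro f
    have e1 := fc_intertwine_one hKA.isHermitian hKD _ hs f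
    have e2 := fc_intertwine_one hKA.isHermitian hKA.isHermitian _ hAs.symm f
    have e3 : Q.b.E (Q.c.E ρ) * (fc KA f - fc KD f) = 0 := by
      rw [← hss, Matrix.mul_assoc, Matrix.mul_sub, ← e1, ← e2, sub_self, Matrix.mul_zero]
    have := hsuppAD _ e3
    rwa [Matrix.mul_sub, sub_eq_zero] at this
  have hKAB : KA * Q.c.E (Q.d.E ρ) = Q.c.E (Q.d.E ρ) * KA := by
    have := congrArg Matrix.conjTranspose hRA
    rw [Matrix.conjTranspose_mul, hR.isHermitian.eq, hAB.isHermitian.eq, hKA.isHermitian.eq] at this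
    rw [← hRA, ← this]
  have hker : Q.d.E ρ * fc KA (ind 0) = 0 := by
    nth_rewrite 1 [hRA]
    rw [hKAB, Matrix.mul_assoc, mul_fc_ind hKA.isHermitian]; simp
  have hkerρ : ρ * fc KD (ind 0) = 0 := by
    rw [← hfun]; exact CE.supp_E hρ _ hker
  -- the Klein inequality for `ρ_CD` and `K_D ρ_D`
  have hCD := CE.E_psd (F := Q.a) (CE.E_psd (F := Q.b) hρ)
  have hkerCD : Q.a.E (Q.b.E ρ) * fc KD (ind 0) = 0 := by
    rw [← CE.E_mul_right (hDa.fc hKD _), ← CE.E_mul_right (hDb.fc hKD _), hkerρ, map_zero, map_zero]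
  have hcCD : Q.c.E (Q.a.E (Q.b.E ρ)) = Q.a.E (Q.b.E (Q.c.E ρ)) := by rw [hca, hcb]
  have hkerD : Q.a.E (Q.b.E ρ) * fc (Q.a.E (Q.b.E (Q.c.E ρ))) (ind 0) = 0 := by
    have := CE.supp_E (F := Q.c) hCD
    rw [hcCD] at this
    refine this _ ?_
    rw [mul_fc_ind hD.isHermitian]; simp
  have hω : (KD * Q.a.E (Q.b.E (Q.c.E ρ))).PosSemidef := by
    rw [← CE.E_mul_left hDa, hKω]
    exact CE.E_psd (hKA.mul_mul_conjTranspose_same _)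
  have htr : (Q.a.E (Q.b.E ρ)).trace = (KD * Q.a.E (Q.b.E (Q.c.E ρ))).trace := by
    rw [← CE.E_mul_left hDa, CE.trace_E, CE.trace_E, CE.trace_E, hKω, hsh, Matrix.trace_mul_comm,
      ← Matrix.mul_assoc, hss, hAAD, hAb.tr, ← hAd.tr, hdc, ← hRA, CE.trace_E]
  have hsupp : Supp (Q.a.E (Q.b.E ρ)) (KD * Q.a.E (Q.b.E (Q.c.E ρ))) := by
    intro y hy
    have e1 := fc_prod hKD hD.isHermitian hDD hkerCD hkerD (fun x => 1 - ind 0 x) (fun _ => 1)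
      (fun _ => 0) (fun x y hx hy => by simp [ind, hx, hy])
    rw [fc_one hKD, fc_zero, add_zero, Matrix.mul_one] at e1
    have e2 := fc_mul_eq_zero hω.isHermitian (f := fun x => 1 - ind 0 x) (by simp [ind]) hy
    rw [← e1, Matrix.mul_assoc, e2, Matrix.mul_zero]
  have hlog : ∀ x y : ℝ, x ≠ 0 → y ≠ 0 →
      ((Real.log (x * y) : ℝ) : ℂ) = (Real.log x : ℂ) + (Real.log y : ℂ) := fun x y hx hy => by
    rw [Real.log_mul hx hy]; push_cast; rfl
  have hklein := klein hCD hω htr hsupp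
  have hprod := fc_prod hKD hD.isHermitian hDD hkerCD hkerD (fun x => (Real.log x : ℂ)) _ _ hlog
  have hkerAB : Q.d.E ρ * fc (Q.c.E (Q.d.E ρ)) (ind 0) = 0 := by
    refine CE.supp_E (F := Q.c) hR _ ?_
    rw [mul_fc_ind hAB.isHermitian]; simp
  have hprod' := fc_prod hKA.isHermitian hAB.isHermitian hKAB hker hkerAB
    (fun x => (Real.log x : ℂ)) _ _ hlog
  rw [← hRA] at hprod'
  have tCD : ∀ x : Matrix n n ℂ, Q.a.N x → Q.b.N x →
      (Q.a.E (Q.b.E ρ) * x).trace = (ρ * x).trace := fun x ha hb => by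
    rw [CE.trace_E_mul ha, CE.trace_E_mul hb]
  have hDb' : Q.b.N (Q.a.E (Q.b.E (Q.c.E ρ))) := by rw [Q.ab]; exact CE.N_E _
  have hCDb' : Q.b.N (Q.a.E (Q.b.E ρ)) := by rw [Q.ab]; exact CE.N_E _
  have q1 := congrArg (fun M => (Matrix.trace M).re) hprod
  have q2 := congrArg (fun M => (Matrix.trace M).re) hprod'
  simp only [Matrix.mul_add, Matrix.trace_add, Complex.add_re] at q1 q2
  rw [tCD _ (hDa.fc hKD _) (hDb.fc hKD _),
    tCD _ ((CE.N_E _).fc hD.isHermitian _) (hDb'.fc hD.isHermitian _), ← hfun] at q1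
  rw [CE.trace_E_mul (hAd.fc hKA.isHermitian _), CE.trace_E_mul (hABd.fc hAB.isHermitian _),
    CE.trace_E_mul (hRd.fc hR.isHermitian _)] at q2
  have q3 := tCD _ ((CE.N_E _).fc hCD.isHermitian (fun x => (Real.log x : ℂ)))
    (hCDb'.fc hCD.isHermitian _)
  simp only [lg] at hklein ⊢
  rw [q3] at hklein
  linarith

end Main

/-! ### Tensor factors from matrix units -/

section MatrixUnits
variable {n X Y : Type*} [Fintype n] [DecidableEq n] [Fintype X] [DecidableEq X] [Fintype Y]
  [DecidableEq Y]

/-- A unital system of matrix units inside the algebra of `n × n` matrices; it encodes a tensor factor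
with orthonormal basis `X`. -/
structure MU (X n : Type*) [Fintype X] [DecidableEq X] [Fintype n] [DecidableEq n] where
  /-- the matrix units -/
  U : X → X → Matrix n n ℂ
  mul : ∀ i j k l, U i j * U k l = if j = k then U i l else 0
  star : ∀ i j, (U i j)ᴴ = U j i
  one : ∑ i, U i i = 1

namespace MU
variable (S : MU X n)

/-- The map `x ↦ |X|⁻¹ ∑ U_ij x U_ji`, i.e. the normalized partial trace over the tensor factor. -/
noncomputable def twirl : Matrix n n ℂ →ₗ[ℂ] Matrix n n ℂ where
  toFun x := ((Fintype.card X : ℂ))⁻¹ • ∑ i, ∑ j, S.U i j * x * S.U j i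
  map_add' x y := by simp [Matrix.mul_add, Matrix.add_mul, Finset.sum_add_distrib]
  map_smul' t x := by
    simp only [Matrix.mul_smul, Matrix.smul_mul, ← Finset.smul_sum, RingHom.id_apply]
    rw [smul_comm]

theorem twirl_apply (x : Matrix n n ℂ) :
    S.twirl x = ((Fintype.card X : ℂ))⁻¹ • ∑ i, ∑ j, S.U i j * x * S.U j i := rfl

/-- Commuting with the matrix units suffices for commuting with their span. -/
theorem comm_span {x : Matrix n n ℂ} (h : ∀ i j, S.U i j * x = x * S.U i j) (k : X → X → ℂ) :
    (∑ i, ∑ j, k i j • S.U i j) * x = x * ∑ i, ∑ j, k i j • S.U i j := by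
  simp only [Matrix.sum_mul, Matrix.mul_sum, Matrix.smul_mul, Matrix.mul_smul, h]

theorem unit_eq (i j : X) : S.U i j =
    ∑ i', ∑ j', (if i' = i ∧ j' = j then (1 : ℂ) else 0) • S.U i' j' := by
  rw [Finset.sum_eq_single i, Finset.sum_eq_single j] <;> simp +contextual

/-- The conditional expectation onto the commutant of the matrix units. -/
noncomputable def ce [Nonempty X] : CE n where
  E := S.twirl
  G := {u | ∃ k : X → X → ℂ, u = ∑ i, ∑ j, k i j • S.U i j}
  star_mem := by
    rintro u ⟨k, rfl⟩
    refine ⟨fun i j => Star.star (k j i), ?_⟩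
    simp only [Matrix.conjTranspose_sum, Matrix.conjTranspose_smul, S.star]
    rw [Finset.sum_comm]
  mem' := by
    rintro u ⟨k, rfl⟩ x
    refine S.comm_span (fun p q => ?_) k
    simp only [twirl_apply, Matrix.mul_smul, Matrix.smul_mul, Matrix.mul_sum, Matrix.sum_mul]
    congr 1
    simp only [← Matrix.mul_assoc, S.mul, ite_mul, Matrix.zero_mul]
    simp only [Matrix.mul_assoc, S.mul, mul_ite, Matrix.mul_zero]
    rw [Finset.sum_eq_single q (by intro b _ hb; simp [Ne.symm hb]) (by simp)]
    simp
  tr' := by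
    intro x hx y
    have hU : ∀ i j, S.U i j * x = x * S.U i j := fun i j => hx _ ⟨_, S.unit_eq i j⟩
    have h1 : ∀ i j, (x * (S.U i j * y * S.U j i)).trace = (x * S.U j j * y).trace := by
      intro i j
      rw [← Matrix.mul_assoc, Matrix.trace_mul_comm, ← Matrix.mul_assoc, ← Matrix.mul_assoc, hU,
        Matrix.mul_assoc x, S.mul, if_pos rfl]
    simp only [twirl_apply, Matrix.mul_smul, Matrix.trace_smul, Matrix.mul_sum, Matrix.trace_sum, h1]
    rw [Finset.sum_const, ← Matrix.trace_sum, ← Matrix.sum_mul, ← Matrix.mul_sum, S.one,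
      Matrix.mul_one, Finset.card_univ, nsmul_eq_mul, smul_eq_mul, ← mul_assoc, inv_mul_cancel₀, one_mul]
    exact_mod_cast Fintype.card_ne_zero

variable [Nonempty X] [Nonempty Y]

theorem mem_G (i j : X) : S.U i j ∈ S.ce.G := ⟨_, S.unit_eq i j⟩

theorem N_iff {x : Matrix n n ℂ} : S.ce.N x ↔ ∀ i j, S.U i j * x = x * S.U i j := by
  constructor
  · intro h i j; exact h _ (S.mem_G i j)
  · rintro h u ⟨k, rfl⟩; exact S.comm_span h k

theorem ce_comm (T : MU Y n) (h : ∀ i j k l, S.U i j * T.U k l = T.U k l * S.U i j)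
    (x : Matrix n n ℂ) : S.ce.E (T.ce.E x) = T.ce.E (S.ce.E x) := by
  change S.twirl (T.twirl x) = T.twirl (S.twirl x)
  simp only [twirl_apply, Matrix.mul_smul, Matrix.smul_mul, ← Finset.smul_sum, Matrix.mul_sum,
    Matrix.sum_mul]
  rw [smul_comm]
  congr 2
  have e : ∀ i j k l, S.U i j * (T.U k l * x * T.U l k) * S.U j i =
      T.U k l * (S.U i j * x * S.U j i) * T.U l k := by
    intro i j k l
    calc _ = (S.U i j * T.U k l) * x * (T.U l k * S.U j i) := by simp only [Matrix.mul_assoc]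
      _ = _ := by rw [h, ← h j i l k]; simp only [Matrix.mul_assoc]
  simp only [e]
  calc _ = ∑ i, ∑ k, ∑ j, ∑ l, T.U k l * (S.U i j * x * S.U j i) * T.U l k :=
        Finset.sum_congr rfl fun i _ => Finset.sum_comm
    _ = ∑ k, ∑ i, ∑ l, ∑ j, T.U k l * (S.U i j * x * S.U j i) * T.U l k := by
        rw [Finset.sum_comm]
        exact Finset.sum_congr rfl fun k _ => Finset.sum_congr rfl fun i _ => Finset.sum_comm
    _ = _ := Finset.sum_congr rfl fun k _ => Finset.sum_comm

theorem N_of_G (T : MU Y n) (h : ∀ i j k l, S.U i j * T.U k l = T.U k l * S.U i j)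
    {u : Matrix n n ℂ} (hu : u ∈ T.ce.G) : S.ce.N u := by
  obtain ⟨k, rfl⟩ := hu
  refine S.N_iff.2 fun i j => (T.comm_span (fun p q => (h i j p q).symm) k).symm

/-- An operator is zero if all its slices along the tensor factor vanish. -/
theorem faith (x : Matrix n n ℂ) (hx : ∀ u ∈ S.ce.G, uᴴ = u → S.ce.E (u * x) = 0) : x = 0 := by
  have hU : ∀ i j, S.ce.E (S.U i j * x) = 0 := by
    intro i j
    -- split a matrix unit into its Hermitian and anti-Hermitian parts
    have h1 := hx (S.U i j + S.U j i)
      ⟨fun p q => (if p = i ∧ q = j then 1 else 0) + (if p = j ∧ q = i then 1 else 0), by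
        simp only [add_smul, Finset.sum_add_distrib, ← unit_eq]⟩
      (by rw [Matrix.conjTranspose_add, S.star, S.star, add_comm])
    have h2 := hx (Complex.I • (S.U i j - S.U j i))
      ⟨fun p q => Complex.I * ((if p = i ∧ q = j then 1 else 0) - (if p = j ∧ q = i then 1 else 0)), by
        simp only [mul_smul, ← Finset.smul_sum, sub_smul, Finset.sum_sub_distrib, ← unit_eq]⟩
      (by
        rw [Matrix.conjTranspose_smul, Matrix.conjTranspose_sub, S.star, S.star]
        simp [← smul_neg])
    rw [Matrix.smul_mul, map_smul, smul_eq_zero_iff_right Complex.I_ne_zero, Matrix.sub_mul, map_sub] at h2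
    rw [Matrix.add_mul, map_add] at h1
    have h3 : (2 : ℂ) • S.ce.E (S.U i j * x) = 0 := by
      rw [two_smul]
      calc _ = (S.ce.E (S.U i j * x) + S.ce.E (S.U j i * x)) +
            (S.ce.E (S.U i j * x) - S.ce.E (S.U j i * x)) := by abel
        _ = 0 := by rw [h1, h2, add_zero]
    exact (smul_eq_zero_iff_right two_ne_zero).1 h3
  have hz : ∀ i j, S.U j j * x * S.U i i = 0 := by
    intro i j
    have h1 : ((Fintype.card X : ℂ))⁻¹ • ∑ k, ∑ l, S.U k l * (S.U i j * x) * S.U l k = 0 := hU i j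
    rw [smul_eq_zero_iff_right (by simp)] at h1
    simp only [← Matrix.mul_assoc, S.mul, ite_mul, Matrix.zero_mul, Finset.sum_ite_eq',
      Finset.mem_univ, if_true] at h1
    have h2 := congrArg (fun M => S.U j j * M * S.U j i) h1
    simp only [Matrix.mul_sum, Matrix.sum_mul, ← Matrix.mul_assoc, S.mul, ite_mul, Matrix.zero_mul,
      Matrix.mul_zero, Finset.sum_ite_eq, Finset.mem_univ, if_true] at h2
    simpa [S.mul, Matrix.mul_assoc] using h2
  calc x = (∑ j, S.U j j) * x * ∑ i, S.U i i := by rw [S.one, Matrix.one_mul, Matrix.mul_one]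
    _ = 0 := by
      simp only [Matrix.sum_mul, Matrix.mul_sum, hz, Finset.sum_const_zero]

/-- Matrix coefficients of `x` with respect to the matrix units. -/
noncomputable def coeff (x : Matrix n n ℂ) (i j : X) : Matrix n n ℂ := ∑ k, S.U k i * x * S.U j k

theorem coeff_sum (x : Matrix n n ℂ) : x = ∑ i, ∑ j, S.U i j * S.coeff x i j := by
  have h : ∀ i j, S.U i j * S.coeff x i j = S.U i i * x * S.U j j := by
    intro i j
    simp only [coeff, Matrix.mul_sum, ← Matrix.mul_assoc, S.mul, ite_mul, Matrix.zero_mul]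
    rw [Finset.sum_eq_single j (by intro b _ hb; simp [Ne.symm hb]) (by simp), if_pos rfl]
  simp only [h, ← Matrix.mul_sum, ← Matrix.sum_mul, S.one, Matrix.one_mul, Matrix.mul_one]

theorem coeff_N (x : Matrix n n ℂ) (i j : X) : S.ce.N (S.coeff x i j) := by
  rw [N_iff]
  intro p q
  simp only [coeff, Matrix.mul_sum, Matrix.sum_mul]
  simp only [← Matrix.mul_assoc, S.mul, ite_mul, Matrix.zero_mul]
  simp only [Matrix.mul_assoc, S.mul, mul_ite, Matrix.mul_zero]
  rw [Finset.sum_eq_single q (by intro b _ hb; simp [Ne.symm hb]) (by simp),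
    Finset.sum_eq_single p (by intro b _ hb; simp [hb]) (by simp)]
  simp

theorem coeff_N_of (T : MU Y n) (h : ∀ i j k l, S.U i j * T.U k l = T.U k l * S.U i j)
    {x : Matrix n n ℂ} (hx : T.ce.N x) (i j : X) : T.ce.N (S.coeff x i j) := by
  have hN : ∀ i j, T.ce.N (S.U i j) := fun i j => T.N_iff.2 fun k l => (h i j k l).symm
  exact CE.N_sum _ _ fun k _ => ((hN _ _).mul hx).mul (hN _ _)

/-- If `y` commutes with the matrix units and with every coefficient of `x`, it commutes with `x`. -/
theorem comm_of_coeff {x y : Matrix n n ℂ} (hy : S.ce.N y)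
    (h : ∀ i j, S.coeff x i j * y = y * S.coeff x i j) : x * y = y * x := by
  rw [S.coeff_sum x]
  simp only [Matrix.sum_mul, Matrix.mul_sum]
  refine Finset.sum_congr rfl fun i _ => Finset.sum_congr rfl fun j _ => ?_
  rw [Matrix.mul_assoc, h, ← Matrix.mul_assoc, S.N_iff.1 hy, Matrix.mul_assoc]

end MU

/-- Four mutually commuting systems of matrix units with trivial joint commutant give four parties. -/
noncomputable def partiesOf {X₁ X₂ X₃ X₄ : Type*} [Fintype X₁] [DecidableEq X₁] [Nonempty X₁]
    [Fintype X₂] [DecidableEq X₂] [Nonempty X₂] [Fintype X₃] [DecidableEq X₃] [Nonempty X₃]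
    [Fintype X₄] [DecidableEq X₄] [Nonempty X₄] (A : MU X₁ n) (B : MU X₂ n) (C : MU X₃ n)
    (D : MU X₄ n)
    (hab : ∀ i j k l, A.U i j * B.U k l = B.U k l * A.U i j)
    (hac : ∀ i j k l, A.U i j * C.U k l = C.U k l * A.U i j)
    (had : ∀ i j k l, A.U i j * D.U k l = D.U k l * A.U i j)
    (hbc : ∀ i j k l, B.U i j * C.U k l = C.U k l * B.U i j)
    (hbd : ∀ i j k l, B.U i j * D.U k l = D.U k l * B.U i j)
    (hcd : ∀ i j k l, C.U i j * D.U k l = D.U k l * C.U i j)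
    (hirr : ∀ x y, A.ce.N x → B.ce.N x → C.ce.N x → D.ce.N x → x * y = y * x) : Parties n :=
  have comm₁ : ∀ x y, B.ce.N x → C.ce.N x → A.ce.N y → D.ce.N y → x * y = y * x := by
    intro x y hb hc ha hd
    refine A.comm_of_coeff ha fun i j => D.comm_of_coeff hd fun k l => hirr _ _ ?_ ?_ ?_ ?_
    · exact D.coeff_N_of A (fun i j k l => (had k l i j).symm) (A.coeff_N _ _ _) _ _
    · exact D.coeff_N_of B (fun i j k l => (hbd k l i j).symm) (A.coeff_N_of B hab hb _ _) _ _
    · exact D.coeff_N_of C (fun i j k l => (hcd k l i j).symm) (A.coeff_N_of C hac hc _ _) _ _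
    · exact D.coeff_N _ _ _
  { a := A.ce
    b := B.ce
    c := C.ce
    d := D.ce
    ab := A.ce_comm B hab
    ac := A.ce_comm C hac
    ad := A.ce_comm D had
    bc := B.ce_comm C hbc
    bd := B.ce_comm D hbd
    cd := C.ce_comm D hcd
    gc := fun u hu => ⟨A.N_of_G C hac hu, B.N_of_G C hbc hu,
      D.N_of_G C (fun i j k l => (hcd k l i j).symm) hu⟩
    faith := C.faith
    comm₁ := comm₁
    comm₂ := by
      intro x y hb hc hd ha _ _
      exact A.comm_of_coeff ha fun i j => hirr _ _ (A.coeff_N _ _ _) (A.coeff_N_of B hab hb _ _)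
        (A.coeff_N_of C hac hc _ _) (A.coeff_N_of D had hd _ _)
    cyc := by
      intro x y hxa hxd hya hyc
      -- expand `x` along `B` and move each matrix unit around `y`
      rw [B.coeff_sum x]
      simp only [Matrix.sum_mul, Matrix.mul_sum, map_sum]
      refine Finset.sum_congr rfl fun i _ => Finset.sum_congr rfl fun j _ => ?_
      have hU : ∀ w, B.ce.N w → B.U i j * w = w * B.U i j := fun w hw => B.N_iff.1 hw i j
      have hbx := B.coeff_N x i j
      have hax := B.coeff_N_of A (fun i j k l => (hab k l i j).symm) hxa i j
      have hdx := B.coeff_N_of D hbd hxd i j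
      have hUa : A.ce.N (B.U i j) := A.N_of_G B hab (B.mem_G i j)
      have hUc : C.ce.N (B.U i j) :=
        C.N_of_G B (fun i j k l => (hbc k l i j).symm) (B.mem_G i j)
      rw [Matrix.mul_assoc, CE.E_cyc hU, Matrix.mul_assoc, CE.E_mul_left hbx, ← Matrix.mul_assoc,
        CE.E_mul_right hbx]
      refine (comm₁ _ _ (CE.N_E _) ?_ hax hdx).symm
      exact CE.N_of_comm (fun x => (B.ce_comm C hbc x).symm) (hyc.mul hUc) }

end MatrixUnits

/-! ### Tensor factors of coordinate spaces and their entropies -/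

section Concrete
variable {Ω X W : Type*} [Fintype Ω] [DecidableEq Ω] [Fintype X] [DecidableEq X] [Fintype W]
  [DecidableEq W] (g : X × W ≃ Ω)

/-- The isometry `w ↦ g (i, w)` from `ℂ^W` to `ℂ^Ω`. -/
def iso (i : X) : Matrix Ω W ℂ := Matrix.of fun p w => if p = g (i, w) then 1 else 0

theorem iso_mul {V : Type*} (i : X) (M : Matrix W V ℂ) (p : Ω) (v : V) :
    (iso g i * M) p v = if (g.symm p).1 = i then M (g.symm p).2 v else 0 := by
  rw [Matrix.mul_apply]
  obtain ⟨⟨k, w⟩, rfl⟩ := g.surjective p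
  simp [iso, ite_and, eq_comm]

theorem isoH_mul {V : Type*} (i : X) (M : Matrix Ω V ℂ) (w : W) (v : V) :
    ((iso g i)ᴴ * M) w v = M (g (i, w)) v := by
  rw [Matrix.mul_apply]
  simp [iso, Matrix.conjTranspose_apply, apply_ite]

theorem isoH_iso (i j : X) : (iso g i)ᴴ * iso g j = if i = j then 1 else 0 := by
  ext w v
  rw [isoH_mul]
  by_cases h : i = j <;> simp [iso, h, Matrix.one_apply]

theorem sum_iso : ∑ i, iso g i * (iso g i)ᴴ = 1 := by
  ext p q
  rw [Matrix.sum_apply]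
  simp only [iso_mul]
  simp [iso, Matrix.conjTranspose_apply, apply_ite, Matrix.one_apply, eq_comm]

/-- The matrix units of the tensor factor `ℂ^X` of `ℂ^Ω` given by a bijection `X × W ≃ Ω`. -/
def units : MU X Ω where
  U i j := iso g i * (iso g j)ᴴ
  mul i j k l := by
    rw [Matrix.mul_assoc, ← Matrix.mul_assoc (iso g j)ᴴ, isoH_iso]
    split_ifs <;> simp
  star i j := by simp [Matrix.conjTranspose_mul]
  one := sum_iso g

theorem units_mul (i j : X) (x : Matrix Ω Ω ℂ) (p q : Ω) :
    ((units g).U i j * x) p q = if (g.symm p).1 = i then x (g (j, (g.symm p).2)) q else 0 := by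
  change ((iso g i * (iso g j)ᴴ) * x) p q = _
  rw [Matrix.mul_assoc, iso_mul, isoH_mul]

theorem mul_units (i j : X) (x : Matrix Ω Ω ℂ) (p q : Ω) :
    (x * (units g).U i j) p q = if (g.symm q).1 = j then x p (g (i, (g.symm q).2)) else 0 := by
  have := congrArg (Star.star (R := ℂ)) (units_mul g j i xᴴ q p)
  rw [← Matrix.conjTranspose_apply, Matrix.conjTranspose_mul, (units g).star,
    Matrix.conjTranspose_conjTranspose] at this
  rw [this]
  split_ifs <;> simp [Matrix.conjTranspose_apply]

theorem units_E [Nonempty X] (x : Matrix Ω Ω ℂ) (p q : Ω) :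
    (units g).ce.E x p q = if (g.symm p).1 = (g.symm q).1 then
      ((Fintype.card X : ℂ))⁻¹ * ∑ j, x (g (j, (g.symm p).2)) (g (j, (g.symm q).2)) else 0 := by
  change (units g).twirl x p q = _
  rw [MU.twirl_apply, Matrix.smul_apply, Matrix.sum_apply]
  simp only [Matrix.sum_apply, mul_units, units_mul, smul_eq_mul]
  rw [Finset.sum_eq_single (g.symm q).1]
  · by_cases h : (g.symm p).1 = (g.symm q).1 <;> simp [h]
  · intro b _ hb; simp [Ne.symm hb]
  · simp

/-- The entropy of a marginal `M` of `ρ` in terms of the marginal embedded as `T = c (M ⊗ 1)`. -/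
theorem entropy_bridge {ρ T : Matrix Ω Ω ℂ} {M : Matrix W W ℂ} {c : ℝ} (hc : 0 < c)
    (hρ : ρ.PosSemidef) (htr : ρ.trace = 1) (hT : T.IsHermitian)
    (hTe : ∀ i i' w w', T (g (i, w)) (g (i', w')) = if i = i' then (c : ℂ) * M w w' else 0)
    (hM : ∀ w w', M w w' = ∑ i, ρ (g (i, w)) (g (i, w'))) :
    (ρ * lg T).trace.re = -(vNEntropy M * Real.log 2) + Real.log c := by
  have hMs : M = ∑ i, (iso g i)ᴴ * ρ * iso g i := by
    ext w w'
    rw [hM, Matrix.sum_apply]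
    refine Finset.sum_congr rfl fun i _ => ?_
    rw [Matrix.mul_assoc, isoH_mul, Matrix.mul_apply]
    simp [iso]
  have hMp : M.PosSemidef := by
    rw [hMs]
    exact Matrix.posSemidef_sum _ fun i _ => hρ.conjTranspose_mul_mul_same _
  have hMh := hMp.isHermitian
  have hMtr : M.trace = 1 := by
    rw [hMs, Matrix.trace_sum, ← htr]
    simp only [Matrix.trace_mul_comm _ (iso g _), ← Matrix.mul_assoc]
    rw [← Matrix.trace_sum, ← Matrix.sum_mul, sum_iso, Matrix.one_mul]
  have hinter : ∀ i, T * iso g i = (c : ℂ) • (iso g i * M) := by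
    intro i
    ext p w
    obtain ⟨⟨k, v⟩, rfl⟩ := g.surjective p
    rw [Matrix.smul_apply, iso_mul, Matrix.mul_apply]
    simp [iso, hTe]
  have h1 : (ρ * lg T).trace = (M * fc M (fun x => ((Real.log (c * x) : ℝ) : ℂ))).trace := by
    calc (ρ * lg T).trace = (ρ * lg T * ∑ i, iso g i * (iso g i)ᴴ).trace := by
          rw [sum_iso, Matrix.mul_one]
      _ = ∑ i, (ρ * (lg T * iso g i) * (iso g i)ᴴ).trace := by
          rw [Matrix.mul_sum, Matrix.trace_sum]; simp only [Matrix.mul_assoc]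
      _ = ∑ i, ((iso g i)ᴴ * ρ * iso g i * fc M (fun x => ((Real.log (c * x) : ℝ) : ℂ))).trace := by
          refine Finset.sum_congr rfl fun i _ => ?_
          rw [lg, fc_intertwine hT hMh _ c (hinter i), Matrix.trace_mul_comm]
          simp only [Matrix.mul_assoc]
      _ = _ := by rw [← Matrix.trace_sum, ← Matrix.sum_mul, ← hMs]
  have h2 : (M * fc M (fun x => ((Real.log (c * x) : ℝ) : ℂ))).trace =
      ((∑ i, ev M i * Real.log (c * ev M i) : ℝ) : ℂ) := by
    nth_rewrite 1 [← fc_id hMh]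
    rw [fc_mul hMh, trace_fc hMh]; push_cast; rfl
  have h3 : ∑ i, ev M i = 1 := by
    have := trace_fc hMh (fun x => (x : ℂ))
    rw [fc_id hMh, hMtr] at this
    exact_mod_cast this.symm
  have h4 : vNEntropy M * Real.log 2 = -∑ i, ev M i * Real.log (ev M i) := by
    rw [vNEntropy, dif_pos hMh, neg_mul, Finset.sum_mul]
    congr 1
    refine Finset.sum_congr rfl fun i _ => ?_
    have : ev M i = hMh.eigenvalues i := by rw [ev, dif_pos hMh]
    rw [this, mul_assoc, Real.logb, div_mul_cancel₀ _ (Real.log_pos one_lt_two).ne']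
  rw [h1, h2, Complex.ofReal_re, h4, neg_neg, ← mul_one (Real.log c), ← h3, Finset.mul_sum,
    ← Finset.sum_add_distrib]
  refine Finset.sum_congr rfl fun i _ => ?_
  by_cases h : ev M i = 0
  · simp [h]
  · rw [Real.log_mul hc.ne' h]; ring

end Concrete

/-! ### The four parties and their marginals -/

section Four
variable {A B C D : Type*} [Fintype A] [DecidableEq A] [Fintype B] [DecidableEq B]
  [Fintype C] [DecidableEq C] [Fintype D] [DecidableEq D]

variable (A B C D) in
/-- The bijection singling out the second factor. -/
def gB : B × (A × C × D) ≃ A × B × C × D where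
  toFun p := (p.2.1, p.1, p.2.2)
  invFun p := (p.2.1, p.1, p.2.2)
  left_inv _ := rfl
  right_inv _ := rfl

variable (A B C D) in
/-- The bijection singling out the third factor. -/
def gC : C × (A × B × D) ≃ A × B × C × D where
  toFun p := (p.2.1, p.2.2.1, p.1, p.2.2.2)
  invFun p := (p.2.2.1, p.1, p.2.1, p.2.2.2)
  left_inv _ := rfl
  right_inv _ := rfl

variable (A B C D) in
/-- The bijection singling out the fourth factor. -/
def gD : D × (A × B × C) ≃ A × B × C × D where
  toFun p := (p.2.1, p.2.2.1, p.2.2.2, p.1)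
  invFun p := (p.2.2.2, p.1, p.2.1, p.2.2.1)
  left_inv _ := rfl
  right_inv _ := rfl

@[simp] theorem gB_apply (x : B) (w : A × C × D) : gB A B C D (x, w) = (w.1, x, w.2) := rfl

@[simp] theorem gB_symm (p : A × B × C × D) :
    (gB A B C D).symm p = (p.2.1, p.1, p.2.2) := rfl

@[simp] theorem gC_apply (x : C) (w : A × B × D) :
    gC A B C D (x, w) = (w.1, w.2.1, x, w.2.2) := rfl

@[simp] theorem gC_symm (p : A × B × C × D) :
    (gC A B C D).symm p = (p.2.2.1, p.1, p.2.1, p.2.2.2) := rfl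

@[simp] theorem gD_apply (x : D) (w : A × B × C) :
    gD A B C D (x, w) = (w.1, w.2.1, w.2.2, x) := rfl

@[simp] theorem gD_symm (p : A × B × C × D) :
    (gD A B C D).symm p = (p.2.2.2, p.1, p.2.1, p.2.2.1) := rfl

/-- Matrices commute as soon as their left multiplication operators commute. -/
theorem comm_of_one {n : Type*} [Fintype n] [DecidableEq n] {x y : Matrix n n ℂ}
    (h : ∀ z : Matrix n n ℂ, x * (y * z) = y * (x * z)) : x * y = y * x := by
  simpa using h 1

variable [Nonempty A] [Nonempty B] [Nonempty C] [Nonempty D]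

variable (A B C D) in
/-- The four tensor factors of `ℂ^A ⊗ ℂ^B ⊗ ℂ^C ⊗ ℂ^D`. -/
noncomputable def four : Parties (A × B × C × D) :=
  partiesOf (units (Equiv.refl (A × B × C × D))) (units (gB A B C D)) (units (gC A B C D))
    (units (gD A B C D))
    (fun i j k l => comm_of_one <| by
      intro z
      ext ⟨a, b, c, d⟩ q
      simp only [units_mul, gB_apply, gB_symm, gC_apply, gC_symm, gD_apply, gD_symm,
        Equiv.refl_symm, Equiv.refl_apply]
      split_ifs <;> simp_all [units_mul])
    (fun i j k l => comm_of_one <| by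
      intro z
      ext ⟨a, b, c, d⟩ q
      simp only [units_mul, gB_apply, gB_symm, gC_apply, gC_symm, gD_apply, gD_symm,
        Equiv.refl_symm, Equiv.refl_apply]
      split_ifs <;> simp_all [units_mul])
    (fun i j k l => comm_of_one <| by
      intro z
      ext ⟨a, b, c, d⟩ q
      simp only [units_mul, gB_apply, gB_symm, gC_apply, gC_symm, gD_apply, gD_symm,
        Equiv.refl_symm, Equiv.refl_apply]
      split_ifs <;> simp_all [units_mul])
    (fun i j k l => comm_of_one <| by
      intro z
      ext ⟨a, b, c, d⟩ q
      simp only [units_mul, gB_apply, gB_symm, gC_apply, gC_symm, gD_apply, gD_symm,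
        Equiv.refl_symm, Equiv.refl_apply]
      split_ifs <;> simp_all [units_mul])
    (fun i j k l => comm_of_one <| by
      intro z
      ext ⟨a, b, c, d⟩ q
      simp only [units_mul, gB_apply, gB_symm, gC_apply, gC_symm, gD_apply, gD_symm,
        Equiv.refl_symm, Equiv.refl_apply]
      split_ifs <;> simp_all [units_mul])
    (fun i j k l => comm_of_one <| by
      intro z
      ext ⟨a, b, c, d⟩ q
      simp only [units_mul, gB_apply, gB_symm, gC_apply, gC_symm, gD_apply, gD_symm,
        Equiv.refl_symm, Equiv.refl_apply]
      split_ifs <;> simp_all [units_mul])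
    (by
      intro x y hA hB hC hD
      rw [MU.N_iff] at hA hB hC hD
      -- every matrix unit of the full algebra is a product of the four kinds of matrix units
      have hs : ∀ p q : A × B × C × D, Matrix.single p q (1 : ℂ) =
          (units (Equiv.refl (A × B × C × D))).U p.1 q.1 * ((units (gB A B C D)).U p.2.1 q.2.1 *
            ((units (gC A B C D)).U p.2.2.1 q.2.2.1 *
              ((units (gD A B C D)).U p.2.2.2 q.2.2.2 * 1))) := by
        rintro ⟨a, b, c, d⟩ ⟨a', b', c', d'⟩
        ext ⟨i, j, k, l⟩ q
        simp only [units_mul, gB_apply, gB_symm, gC_apply, gC_symm, gD_apply, gD_symm,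
        Equiv.refl_symm, Equiv.refl_apply,
          Matrix.single_apply, Matrix.one_apply, Prod.mk.injEq]
        split_ifs <;> simp_all
      have hx : x ∈ Set.range (Matrix.scalar (A × B × C × D)) := by
        rw [Matrix.mem_range_scalar_iff_commute_single']
        intro p q
        rw [hs, Matrix.mul_one]
        exact Commute.mul_left (hA _ _) (Commute.mul_left (hB _ _)
          (Commute.mul_left (hC _ _) (hD _ _)))
      obtain ⟨r, rfl⟩ := hx
      exact (Matrix.scalar_commute r (fun r' => mul_comm r r') y).eq)

variable (ρ : Matrix (A × B × C × D) (A × B × C × D) ℂ)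

theorem four_a (a a' : A) (b b' : B) (c c' : C) (d d' : D) :
    (four A B C D).a.E ρ (a, b, c, d) (a', b', c', d') = if a = a' then
      (((Fintype.card A : ℝ)⁻¹ : ℝ) : ℂ) * ∑ i, ρ (i, b, c, d) (i, b', c', d') else 0 := by
  push_cast
  exact units_E (Equiv.refl (A × B × C × D)) ρ (a, b, c, d) (a', b', c', d')

theorem four_b (a a' : A) (b b' : B) (c c' : C) (d d' : D) :
    (four A B C D).b.E ρ (a, b, c, d) (a', b', c', d') = if b = b' then
      (((Fintype.card B : ℝ)⁻¹ : ℝ) : ℂ) * ∑ i, ρ (a, i, c, d) (a', i, c', d') else 0 := by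
  push_cast
  exact units_E (gB A B C D) ρ (a, b, c, d) (a', b', c', d')

theorem four_c (a a' : A) (b b' : B) (c c' : C) (d d' : D) :
    (four A B C D).c.E ρ (a, b, c, d) (a', b', c', d') = if c = c' then
      (((Fintype.card C : ℝ)⁻¹ : ℝ) : ℂ) * ∑ i, ρ (a, b, i, d) (a', b', i, d') else 0 := by
  push_cast
  exact units_E (gC A B C D) ρ (a, b, c, d) (a', b', c', d')

theorem four_d (a a' : A) (b b' : B) (c c' : C) (d d' : D) :
    (four A B C D).d.E ρ (a, b, c, d) (a', b', c', d') = if d = d' then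
      (((Fintype.card D : ℝ)⁻¹ : ℝ) : ℂ) * ∑ i, ρ (a, b, c, i) (a', b', c', i) else 0 := by
  push_cast
  exact units_E (gD A B C D) ρ (a, b, c, d) (a', b', c', d')

theorem card_inv_pos (X : Type*) [Fintype X] [Nonempty X] : 0 < (Fintype.card X : ℝ)⁻¹ :=
  inv_pos.2 (by exact_mod_cast Fintype.card_pos)

/-- A regrouping of the four factors, given by two mutually inverse maps. -/
def regroup {X W Ω : Type*} (f : X → W → Ω) (h : Ω → X × W) (h₁ : ∀ x w, h (f x w) = (x, w))
    (h₂ : ∀ p, f (h p).1 (h p).2 = p) : X × W ≃ Ω where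
  toFun p := f p.1 p.2
  invFun := h
  left_inv p := h₁ p.1 p.2
  right_inv := h₂

variable {ρ}

theorem ent_ABC (hρ : ρ.PosSemidef) (htr : ρ.trace = 1) :
    (ρ * lg ((four A B C D).d.E ρ)).trace.re =
      -(SABC ρ * Real.log 2) + Real.log (Fintype.card D : ℝ)⁻¹ := by
  refine entropy_bridge (gD A B C D) (card_inv_pos D) hρ htr (CE.E_herm hρ.isHermitian) ?_ ?_
  · rintro i i' ⟨a, b, c⟩ ⟨a', b', c'⟩
    simp only [gD_apply, four_d, Matrix.of_apply]
  · intro _ _; rfl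

theorem ent_ABD (hρ : ρ.PosSemidef) (htr : ρ.trace = 1) :
    (ρ * lg ((four A B C D).c.E ρ)).trace.re =
      -(SABD ρ * Real.log 2) + Real.log (Fintype.card C : ℝ)⁻¹ := by
  refine entropy_bridge (gC A B C D) (card_inv_pos C) hρ htr (CE.E_herm hρ.isHermitian) ?_ ?_
  · rintro i i' ⟨a, b, c⟩ ⟨a', b', c'⟩
    simp only [gC_apply, four_c, Matrix.of_apply]
  · intro _ _; rfl

theorem ent_AB (hρ : ρ.PosSemidef) (htr : ρ.trace = 1) :
    (ρ * lg ((four A B C D).c.E ((four A B C D).d.E ρ))).trace.re =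
      -(SAB ρ * Real.log 2) +
        Real.log ((Fintype.card C : ℝ)⁻¹ * (Fintype.card D : ℝ)⁻¹) := by
  refine entropy_bridge (X := C × D) (regroup (fun x (w : A × B) => (w.1, w.2, x.1, x.2))
    (fun p => ((p.2.2.1, p.2.2.2), (p.1, p.2.1))) (fun _ _ => rfl) (fun _ => rfl))
    (mul_pos (card_inv_pos C) (card_inv_pos D)) hρ htr
    (CE.E_herm (CE.E_herm hρ.isHermitian)) ?_ ?_
  · rintro ⟨c, d⟩ ⟨c', d'⟩ ⟨a, b⟩ ⟨a', b'⟩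
    simp only [regroup, Equiv.coe_fn_mk, four_c, four_d, Matrix.of_apply, Prod.mk.injEq]
    by_cases h1 : c = c' <;> by_cases h2 : d = d' <;>
      simp [h1, h2, Finset.mul_sum, mul_assoc, -Complex.ofReal_inv]
  · intro w w'; simp only [Matrix.of_apply, Fintype.sum_prod_type]; rfl

theorem ent_BC (hρ : ρ.PosSemidef) (htr : ρ.trace = 1) :
    (ρ * lg ((four A B C D).a.E ((four A B C D).d.E ρ))).trace.re =
      -(SBC ρ * Real.log 2) +
        Real.log ((Fintype.card A : ℝ)⁻¹ * (Fintype.card D : ℝ)⁻¹) := by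
  refine entropy_bridge (X := A × D) (regroup (fun x (w : B × C) => (x.1, w.1, w.2, x.2))
    (fun p => ((p.1, p.2.2.2), (p.2.1, p.2.2.1))) (fun _ _ => rfl) (fun _ => rfl))
    (mul_pos (card_inv_pos A) (card_inv_pos D)) hρ htr
    (CE.E_herm (CE.E_herm hρ.isHermitian)) ?_ ?_
  · rintro ⟨a, d⟩ ⟨a', d'⟩ ⟨b, c⟩ ⟨b', c'⟩
    simp only [regroup, Equiv.coe_fn_mk, four_a, four_d, Matrix.of_apply, Prod.mk.injEq]
    by_cases h1 : a = a' <;> by_cases h2 : d = d' <;>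
      simp [h1, h2, Finset.mul_sum, mul_assoc, -Complex.ofReal_inv]
  · intro w w'; simp only [Matrix.of_apply, Fintype.sum_prod_type]; rfl

theorem ent_AC (hρ : ρ.PosSemidef) (htr : ρ.trace = 1) :
    (ρ * lg ((four A B C D).b.E ((four A B C D).d.E ρ))).trace.re =
      -(SAC ρ * Real.log 2) +
        Real.log ((Fintype.card B : ℝ)⁻¹ * (Fintype.card D : ℝ)⁻¹) := by
  refine entropy_bridge (X := B × D) (regroup (fun x (w : A × C) => (w.1, x.1, w.2, x.2))
    (fun p => ((p.2.1, p.2.2.2), (p.1, p.2.2.1))) (fun _ _ => rfl) (fun _ => rfl))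
    (mul_pos (card_inv_pos B) (card_inv_pos D)) hρ htr
    (CE.E_herm (CE.E_herm hρ.isHermitian)) ?_ ?_
  · rintro ⟨b, d⟩ ⟨b', d'⟩ ⟨a, c⟩ ⟨a', c'⟩
    simp only [regroup, Equiv.coe_fn_mk, four_b, four_d, Matrix.of_apply, Prod.mk.injEq]
    by_cases h1 : b = b' <;> by_cases h2 : d = d' <;>
      simp [h1, h2, Finset.mul_sum, mul_assoc, -Complex.ofReal_inv]
  · intro w w'; simp only [Matrix.of_apply, Fintype.sum_prod_type]; rfl

theorem ent_AD (hρ : ρ.PosSemidef) (htr : ρ.trace = 1) :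
    (ρ * lg ((four A B C D).b.E ((four A B C D).c.E ρ))).trace.re =
      -(SAD ρ * Real.log 2) +
        Real.log ((Fintype.card B : ℝ)⁻¹ * (Fintype.card C : ℝ)⁻¹) := by
  refine entropy_bridge (X := B × C) (regroup (fun x (w : A × D) => (w.1, x.1, x.2, w.2))
    (fun p => ((p.2.1, p.2.2.1), (p.1, p.2.2.2))) (fun _ _ => rfl) (fun _ => rfl))
    (mul_pos (card_inv_pos B) (card_inv_pos C)) hρ htr
    (CE.E_herm (CE.E_herm hρ.isHermitian)) ?_ ?_
  · rintro ⟨b, c⟩ ⟨b', c'⟩ ⟨a, d⟩ ⟨a', d'⟩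
    simp only [regroup, Equiv.coe_fn_mk, four_b, four_c, Matrix.of_apply, Prod.mk.injEq]
    by_cases h1 : b = b' <;> by_cases h2 : c = c' <;>
      simp [h1, h2, Finset.mul_sum, mul_assoc, -Complex.ofReal_inv]
  · intro w w'; simp only [Matrix.of_apply, Fintype.sum_prod_type]; rfl

theorem ent_BD (hρ : ρ.PosSemidef) (htr : ρ.trace = 1) :
    (ρ * lg ((four A B C D).a.E ((four A B C D).c.E ρ))).trace.re =
      -(SBD ρ * Real.log 2) +
        Real.log ((Fintype.card A : ℝ)⁻¹ * (Fintype.card C : ℝ)⁻¹) := by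
  refine entropy_bridge (X := A × C) (regroup (fun x (w : B × D) => (x.1, w.1, x.2, w.2))
    (fun p => ((p.1, p.2.2.1), (p.2.1, p.2.2.2))) (fun _ _ => rfl) (fun _ => rfl))
    (mul_pos (card_inv_pos A) (card_inv_pos C)) hρ htr
    (CE.E_herm (CE.E_herm hρ.isHermitian)) ?_ ?_
  · rintro ⟨a, c⟩ ⟨a', c'⟩ ⟨b, d⟩ ⟨b', d'⟩
    simp only [regroup, Equiv.coe_fn_mk, four_a, four_c, Matrix.of_apply, Prod.mk.injEq]
    by_cases h1 : a = a' <;> by_cases h2 : c = c' <;>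
      simp [h1, h2, Finset.mul_sum, mul_assoc, -Complex.ofReal_inv]
  · intro w w'; simp only [Matrix.of_apply, Fintype.sum_prod_type]; rfl

theorem ent_CD (hρ : ρ.PosSemidef) (htr : ρ.trace = 1) :
    (ρ * lg ((four A B C D).a.E ((four A B C D).b.E ρ))).trace.re =
      -(SCD ρ * Real.log 2) +
        Real.log ((Fintype.card A : ℝ)⁻¹ * (Fintype.card B : ℝ)⁻¹) := by
  refine entropy_bridge (X := A × B) (regroup (fun x (w : C × D) => (x.1, x.2, w.1, w.2))
    (fun p => ((p.1, p.2.1), (p.2.2.1, p.2.2.2))) (fun _ _ => rfl) (fun _ => rfl))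
    (mul_pos (card_inv_pos A) (card_inv_pos B)) hρ htr
    (CE.E_herm (CE.E_herm hρ.isHermitian)) ?_ ?_
  · rintro ⟨a, b⟩ ⟨a', b'⟩ ⟨c, d⟩ ⟨c', d'⟩
    simp only [regroup, Equiv.coe_fn_mk, four_a, four_b, Matrix.of_apply, Prod.mk.injEq]
    by_cases h1 : a = a' <;> by_cases h2 : b = b' <;>
      simp [h1, h2, Finset.mul_sum, mul_assoc, -Complex.ofReal_inv]
  · intro w w'; simp only [Matrix.of_apply, Fintype.sum_prod_type]; rfl

theorem ent_A (hρ : ρ.PosSemidef) (htr : ρ.trace = 1) :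
    (ρ * lg ((four A B C D).b.E ((four A B C D).c.E ((four A B C D).d.E ρ)))).trace.re =
      -(SA ρ * Real.log 2) +
        Real.log ((Fintype.card B : ℝ)⁻¹ * ((Fintype.card C : ℝ)⁻¹ * (Fintype.card D : ℝ)⁻¹)) := by
  refine entropy_bridge (X := B × C × D) (regroup (fun x (w : A) => (w, x.1, x.2.1, x.2.2))
    (fun p => ((p.2.1, p.2.2.1, p.2.2.2), p.1)) (fun _ _ => rfl) (fun _ => rfl))
    (mul_pos (card_inv_pos B) (mul_pos (card_inv_pos C) (card_inv_pos D))) hρ htr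
    (CE.E_herm (CE.E_herm (CE.E_herm hρ.isHermitian))) ?_ ?_
  · rintro ⟨b, c, d⟩ ⟨b', c', d'⟩ a a'
    simp only [regroup, Equiv.coe_fn_mk, four_b, four_c, four_d, Matrix.of_apply, Prod.mk.injEq]
    by_cases h1 : b = b' <;> by_cases h2 : c = c' <;> by_cases h3 : d = d' <;>
      simp [h1, h2, h3, Finset.mul_sum, mul_assoc, -Complex.ofReal_inv]
  · intro w w'; simp only [Matrix.of_apply, Fintype.sum_prod_type]; rfl

theorem ent_B (hρ : ρ.PosSemidef) (htr : ρ.trace = 1) :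
    (ρ * lg ((four A B C D).a.E ((four A B C D).c.E ((four A B C D).d.E ρ)))).trace.re =
      -(SB ρ * Real.log 2) +
        Real.log ((Fintype.card A : ℝ)⁻¹ * ((Fintype.card C : ℝ)⁻¹ * (Fintype.card D : ℝ)⁻¹)) := by
  refine entropy_bridge (X := A × C × D) (regroup (fun x (w : B) => (x.1, w, x.2.1, x.2.2))
    (fun p => ((p.1, p.2.2.1, p.2.2.2), p.2.1)) (fun _ _ => rfl) (fun _ => rfl))
    (mul_pos (card_inv_pos A) (mul_pos (card_inv_pos C) (card_inv_pos D))) hρ htr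
    (CE.E_herm (CE.E_herm (CE.E_herm hρ.isHermitian))) ?_ ?_
  · rintro ⟨a, c, d⟩ ⟨a', c', d'⟩ b b'
    simp only [regroup, Equiv.coe_fn_mk, four_a, four_c, four_d, Matrix.of_apply, Prod.mk.injEq]
    by_cases h1 : a = a' <;> by_cases h2 : c = c' <;> by_cases h3 : d = d' <;>
      simp [h1, h2, h3, Finset.mul_sum, mul_assoc, -Complex.ofReal_inv]
  · intro w w'; simp only [Matrix.of_apply, Fintype.sum_prod_type]; rfl

theorem ent_D (hρ : ρ.PosSemidef) (htr : ρ.trace = 1) :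
    (ρ * lg ((four A B C D).a.E ((four A B C D).b.E ((four A B C D).c.E ρ)))).trace.re =
      -(SD ρ * Real.log 2) +
        Real.log ((Fintype.card A : ℝ)⁻¹ * ((Fintype.card B : ℝ)⁻¹ * (Fintype.card C : ℝ)⁻¹)) := by
  refine entropy_bridge (X := A × B × C) (regroup (fun x (w : D) => (x.1, x.2.1, x.2.2, w))
    (fun p => ((p.1, p.2.1, p.2.2.1), p.2.2.2)) (fun _ _ => rfl) (fun _ => rfl))
    (mul_pos (card_inv_pos A) (mul_pos (card_inv_pos B) (card_inv_pos C))) hρ htr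
    (CE.E_herm (CE.E_herm (CE.E_herm hρ.isHermitian))) ?_ ?_
  · rintro ⟨a, b, c⟩ ⟨a', b', c'⟩ d d'
    simp only [regroup, Equiv.coe_fn_mk, four_a, four_b, four_c, Matrix.of_apply, Prod.mk.injEq]
    by_cases h1 : a = a' <;> by_cases h2 : b = b' <;> by_cases h3 : c = c' <;>
      simp [h1, h2, h3, Finset.mul_sum, mul_assoc, -Complex.ofReal_inv]
  · intro w w'; simp only [Matrix.of_apply, Fintype.sum_prod_type]; rfl

end Four

end LW

/-- **Theorem 1 (Linden–Winter).** If a quadripartite state saturates strong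
subadditivity for the triples `ABC`, `CAB` and `ADB` (pivot in the middle), i.e.
`I(A;C|B) = 0`, `I(C;B|A) = 0` and `I(A;B|D) = 0`, then `I(C;D) ≥ I(C;AB)`. -/
theorem constrained_inequality
    {A B C D : Type*} [Fintype A] [DecidableEq A] [Fintype B] [DecidableEq B]
    [Fintype C] [DecidableEq C] [Fintype D] [DecidableEq D]
    (ρ : Matrix (A × B × C × D) (A × B × C × D) ℂ) (hρ : IsState ρ)
    (hACB : SAB ρ + SBC ρ - SABC ρ - SB ρ = 0)
    (hCBA : SAC ρ + SAB ρ - SABC ρ - SA ρ = 0)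
    (hABD : SAD ρ + SBD ρ - SABD ρ - SD ρ = 0) :
    SC ρ + SAB ρ - SABC ρ ≤ SC ρ + SD ρ - SCD ρ := by
  obtain ⟨hp, ht⟩ := hρ
  -- a trace-one matrix has a nonempty index set
  have hne : Nonempty (A × B × C × D) := by
    by_contra h
    rw [not_nonempty_iff] at h
    simp [Matrix.trace] at ht
  obtain ⟨a, b, c, d⟩ := hne
  have : Nonempty A := ⟨a⟩
  have : Nonempty B := ⟨b⟩
  have : Nonempty C := ⟨c⟩
  have : Nonempty D := ⟨d⟩
  have kA := (LW.card_inv_pos A).ne'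
  have kB := (LW.card_inv_pos B).ne'
  have kC := (LW.card_inv_pos C).ne'
  have kD := (LW.card_inv_pos D).ne'
  have hl : 0 < Real.log 2 := Real.log_pos one_lt_two
  have e1 := congrArg (· * Real.log 2) hACB
  have e2 := congrArg (· * Real.log 2) hCBA
  have e3 := congrArg (· * Real.log 2) hABD
  simp only [sub_mul, add_mul, zero_mul] at e1 e2 e3
  have main := LW.abstract_main (LW.four A B C D) hp
    (by
      rw [LW.ent_ABC hp ht, LW.ent_AB hp ht, LW.ent_BC hp ht, LW.ent_B hp ht,
        Real.log_mul kA (mul_ne_zero kC kD), Real.log_mul kA kD, Real.log_mul kC kD]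
      linarith)
    (by
      rw [LW.ent_ABC hp ht, LW.ent_AB hp ht, LW.ent_AC hp ht, LW.ent_A hp ht,
        Real.log_mul kB (mul_ne_zero kC kD), Real.log_mul kB kD, Real.log_mul kC kD]
      linarith)
    (by
      rw [LW.ent_ABD hp ht, LW.ent_AD hp ht, LW.ent_BD hp ht, LW.ent_D hp ht,
        Real.log_mul kA (mul_ne_zero kB kC), Real.log_mul kA kC, Real.log_mul kB kC]
      linarith)
  rw [LW.ent_ABC hp ht, LW.ent_AB hp ht, LW.ent_CD hp ht, LW.ent_D hp ht,
    Real.log_mul kA (mul_ne_zero kB kC), Real.log_mul kB kC, Real.log_mul kC kD,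
    Real.log_mul kA kB] at main
  have : (SAB ρ - SABC ρ) * Real.log 2 ≤ (SD ρ - SCD ρ) * Real.log 2 := by
    simp only [sub_mul]; linarith
  linarith [le_of_mul_le_mul_right this hl]
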